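/- There exist absolute constants C, c > 0 such that the following holds for every integer d ≥ 2 and ε = 1/(C·d·√(log d)). Let G = (V, E) be a graph on n vertices with maximum degree at most d, with signs b_{ij} ∈ {−1,+1} and nonnegative weights w_{ij} ≥ 0 on the edges, and total weight W = Σ_{{i,j}∈E} w_{ij}. Let v_1, …, v_n be unit vectors in ℝⁿ such that b_{ij}⟨v_i, v_j⟩ ∈ [ρ*−0.01, ρ*+0.01] for every edge {i,j}, and such that ‖a_i v_i − a_j v_j‖² + ‖a_j v_j − a_k v_k‖² ≥ ‖a_i v_i − a_k v_k‖² for every triple of vertices {i,j,k} and all signs a_i, a_j, a_k ∈ {−1,+1}. Let g ~ N(0, I_n), set x_i = sgn(⟨g, v_i⟩), let S = {i ∈ V : |⟨g, v_i⟩| < ε}, for i ∈ S let B_i = {j ∈ N(i) : b_{ij} x_i ⟨g, v_j⟩ ≤ −ε}, let W_i = Σ_{j∈N(i)} w_{ij}, and let Δ_i = max(0, 2·Σ_{j∈B_i} w_{ij} − W_i). Then E_g[Σ_{i∈S} Δ_i] ≥ c · W/(d² · log d). -/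

import Mathlib

open MeasureTheory ProbabilityTheory

/-- The Goemans–Williamson ratio function `f(ρ) = (1 + (2/π) arcsin ρ)/(1+ρ)`. -/
noncomputable def gwRatio (ρ : ℝ) : ℝ := (1 + 2 / Real.pi * Real.arcsin ρ) / (1 + ρ)

/-!
Fix a vertex `i` and condition on `⟨g, v_i⟩`, which is less than `ε` in absolute value with
probability of order `ε`. For each neighbour `j`, projecting out `v_i` and rescaling leaves a
standard Gaussian `h_j`, jointly independent of `⟨g, v_i⟩`, whose sign is that of `b_{ij}⟨g, v_j⟩`
up to an event of probability `O(ε)`. Hence the expected gain at `i` is essentially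
`ε E|Σ w_{ij} sgn h_j|`.

This mean is bounded below by testing against `Σ w_{ik} sin(t h_k)` with `t ≍ √(log d)`. A closed
formula for `E[sgn X sin(t Y)]` in terms of Dawson's function gives each diagonal term order
`1 / t`, so these contribute `Σ w_{ij}² / t ≥ W_i² / (d t)` by Cauchy–Schwarz. The triangle
inequalities bound the correlations of the `h_j` from below by `-(1 - θ)`, with `θ > 0` absolute, so
the other terms add up to at least `-t exp(-c t²) W_i²`, which is negligible for `t` a large
multiple of `√(log d)`.
-/

open Filter Set Topology

section Dawson

lemma hasDerivAt_exp_sq_div_two (u : ℝ) :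
    HasDerivAt (fun u ↦ Real.exp (u ^ 2 / 2)) (u * Real.exp (u ^ 2 / 2)) u :=
  ((hasDerivAt_pow 2 u).div_const 2).exp.congr_deriv (by norm_num; ring)

lemma integrableOn_sin_mul_mul_exp (a : ℝ) :
    IntegrableOn (fun x : ℝ ↦ Real.sin (a * x) * Real.exp (-(1 / 2) * x ^ 2)) (Ioi 0) :=
  ((integrable_exp_neg_mul_sq (b := 1 / 2) (by norm_num)).bdd_mul (c := 1) (by fun_prop)
    (ae_of_all _ fun x ↦ Real.abs_sin_le_one _)).integrableOn

lemma integrable_mul_cos_mul_exp (a : ℝ) :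
    Integrable fun x : ℝ ↦ Real.cos (a * x) * (x * Real.exp (-(1 / 2) * x ^ 2)) :=
  (integrable_mul_exp_neg_mul_sq (b := 1 / 2) (by norm_num)).bdd_mul (c := 1) (by fun_prop)
    (ae_of_all _ fun x ↦ Real.abs_cos_le_one _)

lemma integral_Ioi_mul_cos_mul_exp (a : ℝ) :
    ∫ x in Ioi 0, Real.cos (a * x) * (x * Real.exp (-(1 / 2) * x ^ 2)) =
      1 - a * ∫ x in Ioi 0, Real.sin (a * x) * Real.exp (-(1 / 2) * x ^ 2) := by
  have hderiv (x : ℝ) : HasDerivAt (fun x ↦ -(Real.cos (a * x) * Real.exp (-(1 / 2) * x ^ 2)))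
      (a * (Real.sin (a * x) * Real.exp (-(1 / 2) * x ^ 2)) +
        Real.cos (a * x) * (x * Real.exp (-(1 / 2) * x ^ 2))) x := by
    have hcos := ((hasDerivAt_id x).const_mul a).cos
    have hexp := ((hasDerivAt_pow 2 x).const_mul (-(1 / 2))).exp
    refine (hcos.mul hexp).neg.congr_deriv ?_
    simp only [id]
    ring
  have hlim : Tendsto (fun x : ℝ ↦ -(Real.cos (a * x) * Real.exp (-(1 / 2) * x ^ 2))) atTop
      (𝓝 0) := by
    have hexp : Tendsto (fun x : ℝ ↦ Real.exp (-(1 / 2) * x ^ 2)) atTop (𝓝 0) :=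
      Real.tendsto_exp_atBot.comp
        ((tendsto_pow_atTop two_ne_zero).const_mul_atTop_of_neg (by norm_num))
    simpa using (isBoundedUnder_le_mul_tendsto_zero (f := fun x : ℝ ↦ Real.cos (a * x))
      (isBoundedUnder_of ⟨1, fun x ↦ Real.abs_cos_le_one _⟩) hexp).neg
  have hsin := integrableOn_sin_mul_mul_exp a
  have hcos := (integrable_mul_cos_mul_exp a).integrableOn (s := Ioi 0)
  have hparts := integral_Ioi_of_hasDerivAt_of_tendsto' (fun x _ ↦ hderiv x)
    ((hsin.const_mul a).add hcos) hlim
  rw [integral_add (hsin.const_mul a) hcos, integral_const_mul] at hparts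
  simp only [mul_zero, Real.cos_zero, ne_eq, OfNat.ofNat_ne_zero, not_false_eq_true, zero_pow,
    Real.exp_zero, mul_one, sub_neg_eq_add, zero_add] at hparts
  linarith

lemma hasDerivAt_integral_Ioi_sin_mul_mul_exp (a : ℝ) :
    HasDerivAt (fun a ↦ ∫ x in Ioi 0, Real.sin (a * x) * Real.exp (-(1 / 2) * x ^ 2))
      (1 - a * ∫ x in Ioi 0, Real.sin (a * x) * Real.exp (-(1 / 2) * x ^ 2)) a := by
  rw [← integral_Ioi_mul_cos_mul_exp]
  refine (hasDerivAt_integral_of_dominated_loc_of_deriv_le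
    (F := fun a x ↦ Real.sin (a * x) * Real.exp (-(1 / 2) * x ^ 2))
    (F' := fun a x ↦ Real.cos (a * x) * (x * Real.exp (-(1 / 2) * x ^ 2)))
    (bound := fun x ↦ |x * Real.exp (-(1 / 2) * x ^ 2)|) univ_mem
    (.of_forall fun b ↦ (integrableOn_sin_mul_mul_exp b).aestronglyMeasurable)
    (integrableOn_sin_mul_mul_exp a)
    (integrable_mul_cos_mul_exp a).integrableOn.aestronglyMeasurable
    (ae_of_all _ fun x b _ ↦ ?_)
    (integrable_mul_exp_neg_mul_sq (by norm_num)).abs.integrableOn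
    (ae_of_all _ fun x b _ ↦ ?_)).2
  · rw [norm_mul]
    exact mul_le_of_le_one_left (norm_nonneg _) (Real.abs_cos_le_one _)
  · refine (((hasDerivAt_id b).mul_const x).sin.mul_const _).congr_deriv ?_
    simp only [id]
    ring

/-- Both sides of the identity are Dawson's function (up to scaling): they solve `D' = 1 - a D`. -/
lemma integral_Ioi_sin_mul_mul_exp (a : ℝ) :
    ∫ x in Ioi 0, Real.sin (a * x) * Real.exp (-(1 / 2) * x ^ 2) =
      Real.exp (-(a ^ 2 / 2)) * ∫ u in 0..a, Real.exp (u ^ 2 / 2) := by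
  set D : ℝ → ℝ := fun a ↦ ∫ x in Ioi 0, Real.sin (a * x) * Real.exp (-(1 / 2) * x ^ 2) with hD
  have hderiv (u : ℝ) : HasDerivAt (fun u ↦ Real.exp (u ^ 2 / 2) * D u)
      (Real.exp (u ^ 2 / 2)) u := by
    have hmul := (hasDerivAt_exp_sq_div_two u).mul (hasDerivAt_integral_Ioi_sin_mul_mul_exp u)
    exact hmul.congr_deriv (by ring)
  have hD0 : D 0 = 0 := by simp [hD]
  rw [intervalIntegral.integral_eq_sub_of_hasDerivAt (fun u _ ↦ hderiv u)
    (Continuous.intervalIntegrable (by fun_prop) _ _), hD0, mul_zero, sub_zero, ← mul_assoc,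
    ← Real.exp_add, neg_add_cancel, Real.exp_zero, one_mul]

lemma inv_sqrt_two_mul_pi_mem_Icc : (√(2 * Real.pi))⁻¹ ∈ Icc (1 / 3 : ℝ) (1 / 2) := by
  have hpi := Real.pi_gt_three
  have hpi' := Real.pi_lt_four
  rw [← one_div]
  constructor
  · exact one_div_le_one_div_of_le (by positivity) (Real.sqrt_le_iff.2 ⟨by norm_num, by linarith⟩)
  · exact one_div_le_one_div_of_le (by norm_num) (Real.le_sqrt_of_sq_le (by linarith))

lemma integral_sin_mul_abs_gaussianReal (a : ℝ) :
    ∫ x, Real.sin (a * |x|) ∂gaussianReal 0 1 =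
      2 * (√(2 * Real.pi))⁻¹ *
        (Real.exp (-(a ^ 2 / 2)) * ∫ u in 0..a, Real.exp (u ^ 2 / 2)) := by
  have habs := integral_comp_abs
    (f := fun x ↦ (√(2 * Real.pi))⁻¹ * (Real.sin (a * x) * Real.exp (-(1 / 2) * x ^ 2)))
  rw [integral_const_mul (μ := volume.restrict _), integral_Ioi_sin_mul_mul_exp] at habs
  rw [integral_gaussianReal_eq_integral_smul one_ne_zero, mul_assoc, ← habs]
  refine integral_congr_ae (ae_of_all _ fun x ↦ ?_)
  simp only [gaussianPDFReal, NNReal.coe_one, mul_one, sub_zero, smul_eq_mul, sq_abs]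
  rw [show -x ^ 2 / 2 = -(1 / 2) * x ^ 2 by ring]
  ring

lemma exp_sub_one_div_le_integral_exp_sq {t : ℝ} (ht : 0 < t) :
    (Real.exp (t ^ 2 / 2) - 1) / t ≤ ∫ u in 0..t, Real.exp (u ^ 2 / 2) := by
  have hderiv (u : ℝ) : HasDerivAt (fun u ↦ Real.exp (u ^ 2 / 2) / t)
      (u / t * Real.exp (u ^ 2 / 2)) u := by
    exact ((hasDerivAt_exp_sq_div_two u).div_const t).congr_deriv (by ring)
  have hcont : Continuous fun u ↦ u / t * Real.exp (u ^ 2 / 2) := by fun_prop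
  calc (Real.exp (t ^ 2 / 2) - 1) / t = ∫ u in 0..t, u / t * Real.exp (u ^ 2 / 2) := by
        rw [intervalIntegral.integral_eq_sub_of_hasDerivAt (fun u _ ↦ hderiv u)
          (hcont.intervalIntegrable _ _)]
        simp [sub_div]
    _ ≤ ∫ u in 0..t, Real.exp (u ^ 2 / 2) := by
        refine intervalIntegral.integral_mono_on ht.le (hcont.intervalIntegrable _ _)
          (Continuous.intervalIntegrable (by fun_prop) _ _) fun u hu ↦ ?_
        exact mul_le_of_le_one_left (Real.exp_nonneg _) ((div_le_one ht).2 hu.2)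

lemma neg_mul_exp_le_integral_exp_sq {a b : ℝ} (hb : 0 ≤ b) (hab : -b ≤ a) :
    -(b * Real.exp (b ^ 2 / 2)) ≤ ∫ u in 0..a, Real.exp (u ^ 2 / 2) := by
  rcases le_total 0 a with ha | ha
  · exact (neg_nonpos.2 (by positivity)).trans
      (intervalIntegral.integral_nonneg ha fun u _ ↦ (Real.exp_pos _).le)
  · rw [intervalIntegral.integral_symm, neg_le_neg_iff]
    calc ∫ u in a..0, Real.exp (u ^ 2 / 2) ≤ ∫ _ in a..0, Real.exp (b ^ 2 / 2) := by
          refine intervalIntegral.integral_mono_on ha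
            (Continuous.intervalIntegrable (by fun_prop) _ _) (by simp) fun u hu ↦ ?_
          have : u ^ 2 ≤ b ^ 2 := sq_le_sq' (by linarith [hu.1]) (by linarith [hu.2])
          gcongr
      _ ≤ b * Real.exp (b ^ 2 / 2) := by
          simp only [intervalIntegral.integral_const, zero_sub, smul_eq_mul]
          gcongr
          linarith

end Dawson

section Correlation

variable {Ω : Type*} {mΩ : MeasurableSpace Ω} {P : Measure Ω} {X Y Z : Ω → ℝ}

lemma measurable_realSign : Measurable Real.sign :=
  .ite measurableSet_Iio measurable_const (.ite measurableSet_Ioi measurable_const measurable_const)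

lemma abs_realSign_le_one (x : ℝ) : |Real.sign x| ≤ 1 := by
  rcases Real.sign_apply_eq x with h | h | h <;> norm_num [h]

lemma integrable_sign [IsFiniteMeasure P] (hX : AEMeasurable X P) :
    Integrable (fun ω ↦ Real.sign (X ω)) P :=
  .of_bound (measurable_realSign.comp_aemeasurable hX).aestronglyMeasurable 1
    (ae_of_all _ fun _ ↦ abs_realSign_le_one _)

lemma realSign_mul_sin_mul (a x : ℝ) : Real.sign x * Real.sin (a * x) = Real.sin (a * |x|) := by
  rcases lt_trichotomy x 0 with h | rfl | h
  · rw [Real.sign_of_neg h, abs_of_neg h, mul_neg, Real.sin_neg, neg_one_mul]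
  · simp
  · rw [Real.sign_of_pos h, abs_of_pos h, one_mul]

lemma integral_comp_eq_zero_of_odd {v : NNReal} {f : ℝ → ℝ} (hX : HasLaw X (gaussianReal 0 v) P)
    (hf : Measurable f) (hodd : f.Odd) : ∫ ω, f (X ω) ∂P = 0 := by
  have hsymm := integral_map (μ := gaussianReal 0 v) (f := f) measurable_neg.aemeasurable
    hf.aestronglyMeasurable
  simp only [gaussianReal_map_neg, neg_zero, hodd _, integral_neg] at hsymm
  have hcomp := hX.integral_comp (f := f) hf.aestronglyMeasurable
  simp only [Function.comp_apply] at hcomp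
  linarith

lemma integral_cos_mul_of_hasLaw {v : NNReal} (hX : HasLaw X (gaussianReal 0 v) P) (t : ℝ) :
    ∫ ω, Real.cos (t * X ω) ∂P = Real.exp (-(v * t ^ 2 / 2)) := by
  have hchar := charFun_gaussianReal (μ := 0) (v := v) t
  have hint : Integrable (fun x : ℝ ↦ Complex.exp (t * x * Complex.I)) (gaussianReal 0 v) :=
    .of_bound (by fun_prop) 1 (ae_of_all _ fun x ↦ by
      rw [← Complex.ofReal_mul, Complex.norm_exp_ofReal_mul_I])
  rw [charFun_apply_real] at hchar
  have hre := congrArg Complex.re hchar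
  rw [← RCLike.re_eq_complex_re, ← integral_re hint] at hre
  have hcomp := hX.integral_comp (f := fun x ↦ Real.cos (t * x)) (by fun_prop)
  simp only [Function.comp_apply] at hcomp
  have hexp : ((t * (0 : ℝ) * Complex.I - v * t ^ 2 / 2 : ℂ)) = ((-(v * t ^ 2 / 2) : ℝ) : ℂ) := by
    push_cast
    ring
  rw [hexp] at hre
  simp only [RCLike.re_eq_complex_re, ← Complex.ofReal_mul, Complex.exp_ofReal_mul_I_re,
    Complex.exp_ofReal_re] at hre
  rw [hcomp, hre]

/-- The part of `Y` uncorrelated with `X`, for `X` of unit variance. -/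
noncomputable def regressionResidual (P : Measure Ω) (X Y : Ω → ℝ) : Ω → ℝ :=
  fun ω ↦ Y ω - cov[X, Y; P] * X ω

lemma memLp_regressionResidual (hX : MemLp X 2 P) (hY : MemLp Y 2 P) :
    MemLp (regressionResidual P X Y) 2 P :=
  hY.sub (hX.const_mul _)

lemma covariance_regressionResidual_right [IsFiniteMeasure P] (hX : MemLp X 2 P) (hY : MemLp Y 2 P)
    (hvar : Var[X; P] = 1) : cov[X, regressionResidual P X Y; P] = 0 := by
  unfold regressionResidual
  rw [covariance_fun_sub_right hX hY (hX.const_mul _), covariance_const_mul_right,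
    covariance_self hX.aestronglyMeasurable.aemeasurable, hvar, mul_one, sub_self]

lemma covariance_regressionResidual_regressionResidual [IsFiniteMeasure P] (hX : MemLp X 2 P)
    (hY : MemLp Y 2 P) (hZ : MemLp Z 2 P) (hvar : Var[X; P] = 1) :
    cov[regressionResidual P X Y, regressionResidual P X Z; P] =
      cov[Y, Z; P] - cov[X, Y; P] * cov[X, Z; P] := by
  have hXR := covariance_regressionResidual_right hX hZ hvar
  change cov[fun ω ↦ Y ω - cov[X, Y; P] * X ω, regressionResidual P X Z; P] = _
  rw [covariance_fun_sub_left hY (hX.const_mul _) (memLp_regressionResidual hX hZ),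
    covariance_const_mul_left, hXR]
  unfold regressionResidual
  rw [covariance_fun_sub_right hY hZ (hX.const_mul _), covariance_const_mul_right,
    covariance_comm Y X]
  ring

lemma integral_regressionResidual (hX : Integrable X P) (hY : Integrable Y P) (hX0 : P[X] = 0)
    (hY0 : P[Y] = 0) : P[regressionResidual P X Y] = 0 := by
  unfold regressionResidual
  rw [integral_sub hY (hX.const_mul _), integral_const_mul, hX0, hY0, mul_zero, sub_zero]

lemma hasLaw_gaussianReal_of_hasGaussianLaw (hX : HasGaussianLaw X P) (hX0 : P[X] = 0) :
    HasLaw X (gaussianReal 0 Var[X; P].toNNReal) P :=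
  ⟨hX.aemeasurable, by rw [hX.map_eq_gaussianReal, hX0]⟩

lemma variance_regressionResidual [IsProbabilityMeasure P] (hX : MemLp X 2 P) (hY : MemLp Y 2 P)
    (hXvar : Var[X; P] = 1) :
    Var[regressionResidual P X Y; P] = Var[Y; P] - cov[X, Y; P] ^ 2 := by
  rw [← covariance_self (memLp_regressionResidual hX hY).aestronglyMeasurable.aemeasurable,
    covariance_regressionResidual_regressionResidual hX hY hY hXvar,
    covariance_self hY.aestronglyMeasurable.aemeasurable, sq]

lemma hasLaw_regressionResidual (hXY : HasGaussianLaw (fun ω ↦ (X ω, Y ω)) P)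
    (hX0 : P[X] = 0) (hY0 : P[Y] = 0) (hXvar : Var[X; P] = 1) :
    HasLaw (regressionResidual P X Y)
      (gaussianReal 0 (Var[Y; P] - cov[X, Y; P] ^ 2).toNNReal) P := by
  have := hXY.isProbabilityMeasure
  have hX := hXY.fst
  have hY := hXY.snd
  have hR : HasGaussianLaw (regressionResidual P X Y) P :=
    hXY.map_fun (ContinuousLinearMap.snd ℝ ℝ ℝ - cov[X, Y; P] • ContinuousLinearMap.fst ℝ ℝ ℝ)
  rw [← variance_regressionResidual hX.memLp_two hY.memLp_two hXvar]
  exact hasLaw_gaussianReal_of_hasGaussianLaw hR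
    (integral_regressionResidual hX.integrable hY.integrable hX0 hY0)

lemma indepFun_regressionResidual (hXY : HasGaussianLaw (fun ω ↦ (X ω, Y ω)) P)
    (hvar : Var[X; P] = 1) :
    IndepFun X (regressionResidual P X Y) P := by
  have := hXY.isProbabilityMeasure
  have hXR : HasGaussianLaw (fun ω ↦ (X ω, regressionResidual P X Y ω)) P :=
    hXY.map_fun ((ContinuousLinearMap.fst ℝ ℝ ℝ).prod
      (ContinuousLinearMap.snd ℝ ℝ ℝ - cov[X, Y; P] • ContinuousLinearMap.fst ℝ ℝ ℝ))
  exact hXR.indepFun_of_covariance_eq_zero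
    (covariance_regressionResidual_right hXY.fst.memLp_two hXY.snd.memLp_two hvar)

lemma integral_sign_mul_sin_self (hX : HasLaw X (gaussianReal 0 1) P) (t : ℝ) :
    ∫ ω, Real.sign (X ω) * Real.sin (t * X ω) ∂P =
      2 * (√(2 * Real.pi))⁻¹ * (Real.exp (-(t ^ 2 / 2)) * ∫ u in 0..t, Real.exp (u ^ 2 / 2)) := by
  have hcomp := hX.integral_comp (f := fun x ↦ Real.sin (t * |x|)) (by fun_prop)
  simp only [Function.comp_apply] at hcomp
  simp only [realSign_mul_sin_mul, hcomp, integral_sin_mul_abs_gaussianReal]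

lemma integral_sign_mul_sin_add {v : NNReal} (hX : AEMeasurable X P)
    (hY : HasLaw Y (gaussianReal 0 v) P) (hXY : IndepFun X Y P) (a t : ℝ) :
    ∫ ω, Real.sign (X ω) * Real.sin (a * X ω + t * Y ω) ∂P =
      (∫ ω, Real.sign (X ω) * Real.sin (a * X ω) ∂P) * Real.exp (-(v * t ^ 2 / 2)) := by
  have := hY.hasGaussianLaw.isProbabilityMeasure
  have hYm := hY.aemeasurable
  have hsign := measurable_realSign
  have hcos : ∫ ω, Real.sign (X ω) * Real.sin (a * X ω) * Real.cos (t * Y ω) ∂P =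
      (∫ ω, Real.sign (X ω) * Real.sin (a * X ω) ∂P) * ∫ ω, Real.cos (t * Y ω) ∂P :=
    hXY.integral_fun_comp_mul_comp (f := fun x ↦ Real.sign x * Real.sin (a * x))
      (g := fun x ↦ Real.cos (t * x)) hX hYm (by fun_prop) (by fun_prop)
  have hsin : ∫ ω, Real.sign (X ω) * Real.cos (a * X ω) * Real.sin (t * Y ω) ∂P =
      (∫ ω, Real.sign (X ω) * Real.cos (a * X ω) ∂P) * ∫ ω, Real.sin (t * Y ω) ∂P :=
    hXY.integral_fun_comp_mul_comp (f := fun x ↦ Real.sign x * Real.cos (a * x))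
      (g := fun x ↦ Real.sin (t * x)) hX hYm (by fun_prop) (by fun_prop)
  have hsin0 : ∫ ω, Real.sin (t * Y ω) ∂P = 0 :=
    integral_comp_eq_zero_of_odd (f := fun x ↦ Real.sin (t * x)) hY (by fun_prop) fun x ↦ by simp
  have hbound {x p q : ℝ} (hp : |p| ≤ 1) (hq : |q| ≤ 1) : ‖Real.sign x * p * q‖ ≤ 1 := by
    rw [Real.norm_eq_abs, abs_mul, abs_mul]
    exact mul_le_one₀ (mul_le_one₀ (abs_realSign_le_one x) (abs_nonneg _) hp) (abs_nonneg _) hq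
  simp only [Real.sin_add, mul_add, ← mul_assoc]
  rw [integral_add, hcos, hsin, hsin0, mul_zero, add_zero, integral_cos_mul_of_hasLaw hY]
  · exact .of_bound (by fun_prop) 1 (ae_of_all _ fun ω ↦ hbound (Real.abs_sin_le_one _)
      (Real.abs_cos_le_one _))
  · exact .of_bound (by fun_prop) 1 (ae_of_all _ fun ω ↦ hbound (Real.abs_cos_le_one _)
      (Real.abs_sin_le_one _))

lemma integral_sign_mul_sin (hXY : HasGaussianLaw (fun ω ↦ (X ω, Y ω)) P)
    (hX : HasLaw X (gaussianReal 0 1) P) (hY : HasLaw Y (gaussianReal 0 1) P) (t : ℝ) :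
    ∫ ω, Real.sign (X ω) * Real.sin (t * Y ω) ∂P = 2 * (√(2 * Real.pi))⁻¹ *
      (Real.exp (-(t ^ 2 / 2)) * ∫ u in 0..t * cov[X, Y; P], Real.exp (u ^ 2 / 2)) := by
  have := hXY.isProbabilityMeasure
  have hXvar : Var[X; P] = 1 := by simp [hX.variance_eq]
  have hYvar : Var[Y; P] = 1 := by simp [hY.variance_eq]
  have hR := hasLaw_regressionResidual hXY (by simp [hX.integral_eq]) (by simp [hY.integral_eq])
    hXvar
  have hvar0 := variance_nonneg (regressionResidual P X Y) P
  rw [variance_regressionResidual hXY.fst.memLp_two hXY.snd.memLp_two hXvar, hYvar] at hvar0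
  rw [hYvar] at hR
  have hsplit (ω : Ω) :
      t * Y ω = t * cov[X, Y; P] * X ω + t * regressionResidual P X Y ω := by
    unfold regressionResidual
    ring
  have hexp : Real.exp (-(t ^ 2 / 2)) = Real.exp (-((t * cov[X, Y; P]) ^ 2 / 2)) *
      Real.exp (-((1 - cov[X, Y; P] ^ 2) * t ^ 2 / 2)) := by
    rw [← Real.exp_add]
    congr 1
    ring
  simp only [hsplit]
  rw [integral_sign_mul_sin_add hX.aemeasurable hR (indepFun_regressionResidual hXY hXvar),
    integral_sign_mul_sin_self hX, Real.coe_toNNReal _ hvar0, hexp]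
  ring

end Correlation

section Duality

variable {Ω ι : Type*} {mΩ : MeasurableSpace Ω} {P : Measure Ω} {X Y : Ω → ℝ}

lemma one_div_le_integral_sign_mul_sin_self (hX : HasLaw X (gaussianReal 0 1) P) {t : ℝ}
    (ht : 2 ≤ t) : 1 / (4 * t) ≤ ∫ ω, Real.sign (X ω) * Real.sin (t * X ω) ∂P := by
  have ht0 : 0 < t := by linarith
  have hexp : Real.exp (-(t ^ 2 / 2)) ≤ 1 / 3 := by
    rw [Real.exp_neg, ← one_div]
    exact one_div_le_one_div_of_le (by norm_num)
      ((by nlinarith : 3 ≤ t ^ 2 / 2 + 1).trans (Real.add_one_le_exp _))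
  have hdawson : 2 / 3 / t ≤
      Real.exp (-(t ^ 2 / 2)) * ∫ u in 0..t, Real.exp (u ^ 2 / 2) := by
    calc 2 / 3 / t ≤ (1 - Real.exp (-(t ^ 2 / 2))) / t := by gcongr; linarith
      _ = Real.exp (-(t ^ 2 / 2)) * ((Real.exp (t ^ 2 / 2) - 1) / t) := by
        rw [← mul_div_assoc, mul_sub, ← Real.exp_add, neg_add_cancel, Real.exp_zero, mul_one]
      _ ≤ _ := by gcongr; exact exp_sub_one_div_le_integral_exp_sq ht0
  rw [integral_sign_mul_sin_self hX]
  calc 1 / (4 * t) ≤ 2 * (1 / 3) * (2 / 3 / t) := by field_simp; norm_num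
    _ ≤ _ := by gcongr; exact inv_sqrt_two_mul_pi_mem_Icc.1

lemma neg_le_integral_sign_mul_sin (hXY : HasGaussianLaw (fun ω ↦ (X ω, Y ω)) P)
    (hX : HasLaw X (gaussianReal 0 1) P) (hY : HasLaw Y (gaussianReal 0 1) P) {t η : ℝ}
    (ht : 0 ≤ t) (hη : 0 ≤ η) (hcov : -η ≤ cov[X, Y; P]) :
    -(η * t * Real.exp (-(t ^ 2 * (1 - η ^ 2) / 2))) ≤
      ∫ ω, Real.sign (X ω) * Real.sin (t * Y ω) ∂P := by
  have hint := neg_mul_exp_le_integral_exp_sq (mul_nonneg ht hη)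
    (by nlinarith : -(t * η) ≤ t * cov[X, Y; P])
  have hexp : Real.exp (-(t ^ 2 / 2)) * -(t * η * Real.exp ((t * η) ^ 2 / 2)) =
      -(η * t * Real.exp (-(t ^ 2 * (1 - η ^ 2) / 2))) := by
    rw [show -(t ^ 2 * (1 - η ^ 2) / 2) = -(t ^ 2 / 2) + (t * η) ^ 2 / 2 by ring, Real.exp_add]
    ring
  rw [integral_sign_mul_sin hXY hX hY]
  calc -(η * t * Real.exp (-(t ^ 2 * (1 - η ^ 2) / 2))) ≤ 2 * (√(2 * Real.pi))⁻¹ *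
        -(η * t * Real.exp (-(t ^ 2 * (1 - η ^ 2) / 2))) := by
        rw [mul_neg, neg_le_neg_iff]
        exact mul_le_of_le_one_left (by positivity) (by linarith [inv_sqrt_two_mul_pi_mem_Icc.2])
    _ ≤ _ := by rw [← hexp]; gcongr

variable [Fintype ι] {w : ι → ℝ}

lemma mul_sq_sum_le_sum_sum [DecidableEq ι] {c : ι → ι → ℝ} {α β d : ℝ} (hw : ∀ j, 0 ≤ w j)
    (hc : ∀ j k, (if j = k then α else 0) - β ≤ c j k) (hα : 0 ≤ α) (hd : 0 < d)
    (hcard : Fintype.card ι ≤ d) :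
    (α / d - β) * (∑ j, w j) ^ 2 ≤ ∑ j, ∑ k, w j * w k * c j k := by
  have hsq : (∑ j, w j) ^ 2 / d ≤ ∑ j, w j ^ 2 := by
    rw [div_le_iff₀' hd]
    exact sq_sum_le_card_mul_sum_sq.trans (by gcongr; exact hcard)
  calc (α / d - β) * (∑ j, w j) ^ 2 = α * ((∑ j, w j) ^ 2 / d) - β * (∑ j, w j) ^ 2 := by ring
    _ ≤ α * ∑ j, w j ^ 2 - β * (∑ j, w j) ^ 2 := by gcongr
    _ = ∑ j, ∑ k, w j * w k * ((if j = k then α else 0) - β) := by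
      simp only [mul_sub, Finset.sum_sub_distrib, mul_ite, mul_zero, Finset.sum_ite_eq,
        Finset.mem_univ, if_true, ← Finset.sum_mul, ← Finset.mul_sum]
      simp only [sq, mul_comm]
    _ ≤ _ := Finset.sum_le_sum fun j _ ↦ Finset.sum_le_sum fun k _ ↦
      mul_le_mul_of_nonneg_left (hc j k) (mul_nonneg (hw j) (hw k))

lemma abs_sum_mul_le_sum {a : ι → ℝ} (hw : ∀ j, 0 ≤ w j) (ha : ∀ j, |a j| ≤ 1) :
    |∑ j, w j * a j| ≤ ∑ j, w j :=
  (Finset.abs_sum_le_sum_abs _ _).trans (Finset.sum_le_sum fun j _ ↦ by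
    rw [abs_mul, abs_of_nonneg (hw j)]
    exact mul_le_of_le_one_right (hw j) (ha j))

lemma sum_sum_mul_integral_le {F H : ι → Ω → ℝ} (hw : ∀ j, 0 ≤ w j)
    (hF : ∀ j, Integrable (F j) P) (hH : ∀ j, AEStronglyMeasurable (H j) P)
    (hH1 : ∀ j ω, |H j ω| ≤ 1) :
    ∑ j, ∑ k, w j * w k * ∫ ω, F j ω * H k ω ∂P ≤
      (∫ ω, |∑ j, w j * F j ω| ∂P) * ∑ j, w j := by
  have hFH (j k : ι) : Integrable (fun ω ↦ w j * w k * (F j ω * H k ω)) P :=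
    ((hF j).mul_bdd (hH k) (ae_of_all _ (hH1 k))).const_mul _
  have hpoint (ω : Ω) : ∑ j, ∑ k, w j * w k * (F j ω * H k ω) ≤
      |∑ j, w j * F j ω| * ∑ j, w j := by
    calc _ = (∑ j, w j * F j ω) * ∑ k, w k * H k ω := by
          rw [Finset.sum_mul_sum]
          simp only [mul_mul_mul_comm]
      _ ≤ |∑ j, w j * F j ω| * |∑ k, w k * H k ω| := by
          rw [← abs_mul]
          exact le_abs_self _
      _ ≤ _ := by
          gcongr
          exact abs_sum_mul_le_sum hw fun k ↦ hH1 k ω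
  calc ∑ j, ∑ k, w j * w k * ∫ ω, F j ω * H k ω ∂P
        = ∫ ω, ∑ j, ∑ k, w j * w k * (F j ω * H k ω) ∂P := by
        rw [integral_finsetSum _ fun j _ ↦ integrable_finsetSum _ fun k _ ↦ hFH j k]
        refine Finset.sum_congr rfl fun j _ ↦ ?_
        rw [integral_finsetSum _ fun k _ ↦ hFH j k]
        simp only [integral_const_mul]
    _ ≤ ∫ ω, |∑ j, w j * F j ω| * ∑ j, w j ∂P :=
        integral_mono (integrable_finsetSum _ fun j _ ↦ integrable_finsetSum _ fun k _ ↦ hFH j k)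
          ((integrable_finsetSum _ fun j _ ↦ (hF j).const_mul _).abs.mul_const _) hpoint
    _ = _ := integral_mul_const _ _

lemma mul_sum_le_integral_abs_sum [DecidableEq ι] {F H : ι → Ω → ℝ} {α β d : ℝ}
    (hw : ∀ j, 0 ≤ w j) (hF : ∀ j, Integrable (F j) P) (hH : ∀ j, AEStronglyMeasurable (H j) P)
    (hH1 : ∀ j ω, |H j ω| ≤ 1)
    (hcorr : ∀ j k, (if j = k then α else 0) - β ≤ ∫ ω, F j ω * H k ω ∂P)
    (hα : 0 ≤ α) (hd : 0 < d) (hcard : Fintype.card ι ≤ d) :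
    (α / d - β) * ∑ j, w j ≤ ∫ ω, |∑ j, w j * F j ω| ∂P := by
  rcases (Finset.sum_nonneg fun j _ ↦ hw j).eq_or_lt with hW | hW
  · rw [← hW, mul_zero]
    exact integral_nonneg fun ω ↦ abs_nonneg _
  refine le_of_mul_le_mul_right ?_ hW
  rw [mul_assoc, ← sq]
  exact (mul_sq_sum_le_sum_sum hw hcorr hα hd hcard).trans (sum_sum_mul_integral_le hw hF hH hH1)

/-- Testing against `∑ w k * sin (t * h k)`: the diagonal gives `1 / (4 * t)`, the other terms
are exponentially small in `t ^ 2`. -/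
lemma div_le_integral_abs_sum_sign {h : ι → Ω → ℝ} {t η d : ℝ} (hw : ∀ j, 0 ≤ w j)
    (hlaw : ∀ j, HasLaw (h j) (gaussianReal 0 1) P)
    (hpair : ∀ j k, HasGaussianLaw (fun ω ↦ (h j ω, h k ω)) P)
    (hcov : ∀ j k, -η ≤ cov[h j, h k; P]) (hη : η ∈ Icc 0 1) (ht : 2 ≤ t)
    (hd : 0 < d) (hcard : Fintype.card ι ≤ d)
    (htd : 8 * t ^ 2 * d * Real.exp (-(t ^ 2 * (1 - η ^ 2) / 2)) ≤ 1) :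
    (∑ j, w j) / (8 * t * d) ≤ ∫ ω, |∑ j, w j * Real.sign (h j ω)| ∂P := by
  classical
  rcases isEmpty_or_nonempty ι with _ | ⟨⟨i⟩⟩
  · simp
  have := (hpair i i).isProbabilityMeasure
  have ht0 : 0 < t := by linarith
  set β := η * t * Real.exp (-(t ^ 2 * (1 - η ^ 2) / 2)) with hβ
  have hβ0 : 0 ≤ β := by have := hη.1; positivity
  have hβle : β ≤ 1 / (8 * t * d) := by
    rw [le_div_iff₀ (by positivity)]
    calc β * (8 * t * d) = η * (8 * t ^ 2 * d * Real.exp (-(t ^ 2 * (1 - η ^ 2) / 2))) := by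
          rw [hβ]; ring
      _ ≤ 1 := mul_le_one₀ hη.2 (by positivity) htd
  have hcorr (j k : ι) : (if j = k then 1 / (4 * t) else 0) - β ≤
      ∫ ω, Real.sign (h j ω) * Real.sin (t * h k ω) ∂P := by
    split_ifs with hjk
    · subst hjk
      linarith [one_div_le_integral_sign_mul_sin_self (hlaw j) ht]
    · linarith [neg_le_integral_sign_mul_sin (hpair j k) (hlaw j) (hlaw k) ht0.le hη.1 (hcov j k)]
  have hsin (j : ι) : AEStronglyMeasurable (fun ω ↦ Real.sin (t * h j ω)) P :=
    (Real.measurable_sin.comp_aemeasurable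
      ((hlaw j).aemeasurable.const_mul t)).aestronglyMeasurable
  calc (∑ j, w j) / (8 * t * d) = (1 / (4 * t) / d - 1 / (8 * t * d)) * ∑ j, w j := by
        field_simp
        ring
    _ ≤ (1 / (4 * t) / d - β) * ∑ j, w j := by
        gcongr
        exact Finset.sum_nonneg fun j _ ↦ hw j
    _ ≤ _ := mul_sum_le_integral_abs_sum hw (fun j ↦ integrable_sign (hlaw j).aemeasurable)
        hsin (fun j ω ↦ Real.abs_sin_le_one _) hcorr (by positivity) hd hcard

end Duality

section SmallBall

lemma gaussianPDFReal_zero_one (x : ℝ) :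
    gaussianPDFReal 0 1 x = (√(2 * Real.pi))⁻¹ * Real.exp (-(x ^ 2 / 2)) := by
  simp [gaussianPDFReal, neg_div]

lemma gaussianPDFReal_zero_one_le (x : ℝ) : gaussianPDFReal 0 1 x ≤ 1 / 2 := by
  rw [gaussianPDFReal_zero_one]
  refine (mul_le_of_le_one_right (by positivity) ?_).trans inv_sqrt_two_mul_pi_mem_Icc.2
  exact Real.exp_le_one_iff.2 (neg_nonpos.2 (by positivity))

lemma le_gaussianPDFReal_zero_one {x : ℝ} (hx : |x| ≤ 1) : 1 / 6 ≤ gaussianPDFReal 0 1 x := by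
  have hexp : 1 / 2 ≤ Real.exp (-(x ^ 2 / 2)) := by
    have := (sq_le_one_iff_abs_le_one x).2 hx
    linarith [Real.add_one_le_exp (-(x ^ 2 / 2))]
  rw [gaussianPDFReal_zero_one]
  calc (1 / 6 : ℝ) = 1 / 3 * (1 / 2) := by norm_num
    _ ≤ _ := by gcongr; exact inv_sqrt_two_mul_pi_mem_Icc.1

lemma measureReal_gaussianReal_zero_one (s : Set ℝ) :
    (gaussianReal 0 1).real s = ∫ x in s, gaussianPDFReal 0 1 x := by
  rw [Measure.real, gaussianReal_apply_eq_integral 0 one_ne_zero, ENNReal.toReal_ofReal]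
  exact integral_nonneg fun x ↦ gaussianPDFReal_nonneg _ _ _

lemma measureReal_gaussianReal_Icc_le {δ : ℝ} (hδ : 0 ≤ δ) :
    (gaussianReal 0 1).real (Icc (-δ) δ) ≤ δ := by
  rw [measureReal_gaussianReal_zero_one]
  calc ∫ x in Icc (-δ) δ, gaussianPDFReal 0 1 x ≤ ∫ _ in Icc (-δ) δ, (1 / 2 : ℝ) :=
        integral_mono (integrable_gaussianPDFReal 0 1).integrableOn (by simp)
          gaussianPDFReal_zero_one_le
    _ = δ := by
        rw [setIntegral_const, Real.volume_real_Icc_of_le (by linarith), smul_eq_mul]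
        ring

lemma le_measureReal_gaussianReal_Ioo {ε : ℝ} (hε0 : 0 ≤ ε) (hε1 : ε ≤ 1) :
    ε / 3 ≤ (gaussianReal 0 1).real (Ioo (-ε) ε) := by
  rw [measureReal_gaussianReal_zero_one]
  calc ε / 3 = ∫ _ in Ioo (-ε) ε, (1 / 6 : ℝ) := by
        rw [setIntegral_const, Real.volume_real_Ioo_of_le (by linarith), smul_eq_mul]
        ring
    _ ≤ ∫ x in Ioo (-ε) ε, gaussianPDFReal 0 1 x :=
        setIntegral_mono_on (by simp) (integrable_gaussianPDFReal 0 1).integrableOn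
          measurableSet_Ioo fun x hx ↦
            le_gaussianPDFReal_zero_one (abs_le.2 ⟨by linarith [hx.1], by linarith [hx.2]⟩)

end SmallBall

section LocalGain

variable {Ω ι : Type*} {mΩ : MeasurableSpace Ω} {P : Measure Ω} [Fintype ι] {w : ι → ℝ}

/-- The gain `1_{|s| < ε} Δ` of flipping a vertex with projection `s`, where `y j = b_{ij}⟨g, v_j⟩`
is the projection of its `j`-th neighbour with the sign of the edge absorbed. -/
noncomputable def localGain (w : ι → ℝ) (ε s : ℝ) (y : ι → ℝ) : ℝ :=
  if |s| < ε then
    max 0 (2 * (∑ j, if (if 0 ≤ s then (1 : ℝ) else -1) * y j ≤ -ε then w j else 0) - ∑ j, w j)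
  else 0

lemma measurable_localGain (w : ι → ℝ) (ε : ℝ) :
    Measurable fun p : ℝ × (ι → ℝ) ↦ localGain w ε p.1 p.2 := by
  have hsign : Measurable fun p : ℝ × (ι → ℝ) ↦ if 0 ≤ p.1 then (1 : ℝ) else -1 :=
    .ite (measurableSet_le measurable_const measurable_fst) measurable_const measurable_const
  have hsum : Measurable fun p : ℝ × (ι → ℝ) ↦
      ∑ j, if (if 0 ≤ p.1 then (1 : ℝ) else -1) * p.2 j ≤ -ε then w j else 0 :=
    Finset.measurable_fun_sum _ fun j _ ↦
      .ite (measurableSet_le (by fun_prop) measurable_const) measurable_const measurable_const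
  exact .ite (measurableSet_lt (by fun_prop) measurable_const) (by fun_prop) measurable_const

lemma localGain_nonneg (ε s : ℝ) (y : ι → ℝ) : 0 ≤ localGain w ε s y := by
  unfold localGain
  split_ifs <;> simp

lemma localGain_le_sum (hw : ∀ j, 0 ≤ w j) (ε s : ℝ) (y : ι → ℝ) :
    localGain w ε s y ≤ ∑ j, w j := by
  have hW : 0 ≤ ∑ j, w j := Finset.sum_nonneg fun j _ ↦ hw j
  rw [localGain]
  split_ifs <;> first
    | exact hW
    | refine max_le hW ?_
      rw [sub_le_iff_le_add, ← two_mul]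
      gcongr with j
      split_ifs <;> simp [hw j]

lemma integrable_localGain [IsFiniteMeasure P] {S : Ω → ℝ} {Y : ι → Ω → ℝ} (hw : ∀ j, 0 ≤ w j)
    (hS : AEMeasurable S P) (hY : ∀ j, AEMeasurable (Y j) P) (ε : ℝ) :
    Integrable (fun ω ↦ localGain w ε (S ω) fun j ↦ Y j ω) P := by
  refine .of_bound (C := ∑ j, w j) ?_ (ae_of_all _ fun ω ↦ ?_)
  · exact ((measurable_localGain w ε).comp_aemeasurable
      (hS.prodMk (aemeasurable_pi_lambda _ hY))).aestronglyMeasurable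
  · rw [Real.norm_eq_abs, abs_of_nonneg (localGain_nonneg ..)]
    exact localGain_le_sum hw ..

lemma neg_mul_sign_sub_le {ε δ s x r σ h : ℝ} (hs : |s| < ε) (hx : x = 1 ∨ x = -1) (hr : |r| ≤ 1)
    (hδ : 0 ≤ δ) (hσδ : 2 * ε ≤ σ * δ) :
    -(x * Real.sign h) - 2 * (Icc (-δ) δ).indicator 1 h ≤
      2 * (if x * (r * s + σ * h) ≤ -ε then 1 else 0) - 1 := by
  have hrs : |r * s| ≤ ε := by
    rw [abs_mul]
    exact (mul_le_of_le_one_left (abs_nonneg s) hr).trans hs.le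
  rw [abs_le] at hrs
  have hε : 0 < ε := (abs_nonneg s).trans_lt hs
  have hσ : 0 ≤ σ := by
    by_contra! hneg
    nlinarith
  -- Outside `[-δ, δ]` the term `σ * h` dominates `r * s`, so `r * s + σ * h` has the sign of `h`.
  by_cases hh : h ∈ Icc (-δ) δ
  · have hsign : -1 ≤ x * Real.sign h := by
      rcases hx with rfl | rfl <;> rcases Real.sign_apply_eq h with h | h | h <;> norm_num [h]
    rw [indicator_of_mem hh, Pi.one_apply]
    split_ifs <;> linarith
  · rw [indicator_of_notMem hh]
    rw [mem_Icc, not_and_or, not_le, not_le] at hh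
    rcases hh with hlt | hgt
    · have hσh : σ * h ≤ -(2 * ε) := by linarith [mul_le_mul_of_nonneg_left hlt.le hσ]
      rw [Real.sign_of_neg (by linarith)]
      rcases hx with rfl | rfl
      · rw [if_pos (by linarith)]; norm_num
      · split_ifs <;> norm_num
    · have hσh : 2 * ε ≤ σ * h := by linarith [mul_le_mul_of_nonneg_left hgt.le hσ]
      rw [Real.sign_of_pos (by linarith)]
      rcases hx with rfl | rfl
      · split_ifs <;> norm_num
      · rw [if_pos (by linarith)]; norm_num

lemma sum_sign_sub_le_localGain {ε δ s : ℝ} {r σ h : ι → ℝ} (hw : ∀ j, 0 ≤ w j) (hs : |s| < ε)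
    (hr : ∀ j, |r j| ≤ 1) (hδ : 0 ≤ δ) (hσδ : ∀ j, 2 * ε ≤ σ j * δ) :
    |∑ j, w j * Real.sign (h j)| / 2 - 2 * ∑ j, w j * (Icc (-δ) δ).indicator 1 (h j) -
        (if 0 ≤ s then 1 else -1) * ((∑ j, w j * Real.sign (h j)) / 2) ≤
      localGain w ε s fun j ↦ r j * s + σ j * h j := by
  rw [localGain, if_pos hs]
  have hx : (if 0 ≤ s then (1 : ℝ) else -1) = 1 ∨ (if 0 ≤ s then (1 : ℝ) else -1) = -1 := by
    split_ifs <;> simp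
  set x : ℝ := if 0 ≤ s then 1 else -1
  set Z := ∑ j, w j * Real.sign (h j) with hZ
  set K := ∑ j, w j * (Icc (-δ) δ).indicator 1 (h j) with hK
  have hK0 : 0 ≤ K := Finset.sum_nonneg fun j _ ↦
    mul_nonneg (hw j) (indicator_nonneg (fun _ _ ↦ zero_le_one) _)
  have hgain : -(x * Z) - 2 * K ≤
      2 * (∑ j, if x * (r j * s + σ j * h j) ≤ -ε then w j else 0) - ∑ j, w j := by
    simp only [hZ, hK, Finset.mul_sum, ← Finset.sum_neg_distrib, ← Finset.sum_sub_distrib]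
    refine Finset.sum_le_sum fun j _ ↦ ?_
    have hj := mul_le_mul_of_nonneg_left (neg_mul_sign_sub_le (h := h j) hs hx (hr j) hδ (hσδ j))
      (hw j)
    calc _ = w j * (-(x * Real.sign (h j)) - 2 * (Icc (-δ) δ).indicator 1 (h j)) := by ring
      _ ≤ _ := hj
      _ = _ := by split_ifs <;> ring
  have hmax : |Z| / 2 - x * (Z / 2) = max 0 (-(x * Z)) := by
    have hxZ : |Z| = |x * Z| := by rcases hx with hx | hx <;> simp [hx]
    rcases abs_cases (x * Z) with ⟨habs, hsgn⟩ | ⟨habs, hsgn⟩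
    · rw [hxZ, habs, max_eq_left (by linarith)]; ring
    · rw [hxZ, habs, max_eq_right (by linarith)]; ring
  rw [sub_right_comm, hmax, sub_le_iff_le_add]
  refine max_le (by positivity) (le_trans ?_ (add_le_add_left (le_max_right _ _) _))
  linarith

lemma integrable_mul_sign {v : NNReal} {X : Ω → ℝ} (hX : HasLaw X (gaussianReal 0 v) P) (a : ℝ) :
    Integrable (fun ω ↦ a * Real.sign (X ω)) P :=
  have := hX.hasGaussianLaw.isProbabilityMeasure
  (integrable_sign hX.aemeasurable).const_mul a

lemma integrable_sum_mul_sign {v : NNReal} {h : ι → Ω → ℝ}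
    (hh : ∀ j, HasLaw (h j) (gaussianReal 0 v) P) :
    Integrable (fun ω ↦ ∑ j, w j * Real.sign (h j ω)) P :=
  integrable_finsetSum _ fun j _ ↦ integrable_mul_sign (hh j) (w j)

lemma integral_sum_sign_eq_zero {v : NNReal} {h : ι → Ω → ℝ}
    (hh : ∀ j, HasLaw (h j) (gaussianReal 0 v) P) :
    ∫ ω, ∑ j, w j * Real.sign (h j ω) ∂P = 0 := by
  rw [integral_finsetSum _ fun j _ ↦ integrable_mul_sign (hh j) (w j)]
  refine Finset.sum_eq_zero fun j _ ↦ ?_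
  rw [integral_const_mul,
    integral_comp_eq_zero_of_odd (hh j) measurable_realSign fun _ ↦ Real.sign_neg, mul_zero]

lemma integral_indicator_one_comp {X : Ω → ℝ} {μ : Measure ℝ} (hX : HasLaw X μ P) {s : Set ℝ}
    (hs : MeasurableSet s) : ∫ ω, s.indicator (1 : ℝ → ℝ) (X ω) ∂P = μ.real s := by
  have hcomp := hX.integral_comp (f := s.indicator (1 : ℝ → ℝ))
    (measurable_one.indicator hs).aestronglyMeasurable
  rwa [integral_indicator_one hs] at hcomp

lemma integrable_indicator_one_comp [IsFiniteMeasure P] {X : Ω → ℝ} (hX : AEMeasurable X P)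
    {s : Set ℝ} (hs : MeasurableSet s) :
    Integrable (fun ω ↦ s.indicator (1 : ℝ → ℝ) (X ω)) P :=
  .of_bound ((measurable_one.indicator hs).comp_aemeasurable hX).aestronglyMeasurable 1
    (ae_of_all _ fun _ ↦ (norm_indicator_le_norm_self _ _).trans (by simp))

lemma integrable_mul_indicator_Icc {v : NNReal} {X : Ω → ℝ} (hX : HasLaw X (gaussianReal 0 v) P)
    (a δ : ℝ) : Integrable (fun ω ↦ a * (Icc (-δ) δ).indicator 1 (X ω)) P :=
  have := hX.hasGaussianLaw.isProbabilityMeasure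
  (integrable_indicator_one_comp hX.aemeasurable measurableSet_Icc).const_mul a

lemma integrable_sum_mul_indicator_Icc {v : NNReal} {h : ι → Ω → ℝ}
    (hh : ∀ j, HasLaw (h j) (gaussianReal 0 v) P) (δ : ℝ) :
    Integrable (fun ω ↦ ∑ j, w j * (Icc (-δ) δ).indicator 1 (h j ω)) P :=
  integrable_finsetSum _ fun j _ ↦ integrable_mul_indicator_Icc (hh j) (w j) δ

lemma integral_sum_indicator_Icc_le {h : ι → Ω → ℝ} {δ : ℝ} (hw : ∀ j, 0 ≤ w j)
    (hh : ∀ j, HasLaw (h j) (gaussianReal 0 1) P) (hδ : 0 ≤ δ) :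
    ∫ ω, ∑ j, w j * (Icc (-δ) δ).indicator 1 (h j ω) ∂P ≤ δ * ∑ j, w j := by
  rw [integral_finsetSum _ fun j _ ↦ integrable_mul_indicator_Icc (hh j) (w j) δ, Finset.mul_sum]
  refine Finset.sum_le_sum fun j _ ↦ ?_
  rw [integral_const_mul, integral_indicator_one_comp (hh j) measurableSet_Icc, mul_comm]
  gcongr
  · exact hw j
  · exact measureReal_gaussianReal_Icc_le hδ

lemma indicator_mul_sub_le_localGain {ε δ s : ℝ} {r σ h : ι → ℝ} (hw : ∀ j, 0 ≤ w j)
    (hr : ∀ j, |r j| ≤ 1) (hδ : 0 ≤ δ) (hσδ : ∀ j, 2 * ε ≤ σ j * δ) :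
    (Ioo (-ε) ε).indicator 1 s * (|∑ j, w j * Real.sign (h j)| / 2 -
        2 * ∑ j, w j * (Icc (-δ) δ).indicator 1 (h j)) -
      ((Ioo (-ε) ε).indicator 1 s * if 0 ≤ s then 1 else -1) *
        ((∑ j, w j * Real.sign (h j)) / 2) ≤
      localGain w ε s fun j ↦ r j * s + σ j * h j := by
  by_cases hs : |s| < ε
  · rw [indicator_of_mem (mem_Ioo.2 (abs_lt.1 hs)), Pi.one_apply, one_mul, one_mul]
    exact sum_sign_sub_le_localGain hw hs hr hδ hσδ
  · rw [indicator_of_notMem (fun hmem ↦ hs (abs_lt.2 (mem_Ioo.1 hmem))), zero_mul, zero_mul,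
      zero_mul, sub_zero]
    exact localGain_nonneg ..

lemma mul_integral_le_integral_of_indepFun {F₁ F₂ G₁ G₂ L : Ω → ℝ} (h₁ : IndepFun F₁ G₁ P)
    (h₂ : IndepFun F₂ G₂ P) (hF₁ : Integrable F₁ P) (hF₂ : Integrable F₂ P)
    (hG₁ : Integrable G₁ P) (hG₂ : Integrable G₂ P) (hzero : P[G₂] = 0) (hL : Integrable L P)
    (hle : ∀ ω, F₁ ω * G₁ ω - F₂ ω * G₂ ω ≤ L ω) :
    P[F₁] * P[G₁] ≤ P[L] := by
  have hint₁ : Integrable (fun ω ↦ F₁ ω * G₁ ω) P := h₁.integrable_mul hF₁ hG₁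
  have hint₂ : Integrable (fun ω ↦ F₂ ω * G₂ ω) P := h₂.integrable_mul hF₂ hG₂
  calc P[F₁] * P[G₁] = ∫ ω, F₁ ω * G₁ ω - F₂ ω * G₂ ω ∂P := by
        rw [integral_sub hint₁ hint₂,
          h₁.integral_fun_mul_eq_mul_integral hF₁.aestronglyMeasurable hG₁.aestronglyMeasurable,
          h₂.integral_fun_mul_eq_mul_integral hF₂.aestronglyMeasurable hG₂.aestronglyMeasurable,
          hzero, mul_zero, sub_zero]
    _ ≤ P[L] := integral_mono (hint₁.sub hint₂) hL hle

/-- The part of the gain that is odd in `h` integrates to zero, so half of the absolute value of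
`∑ w j * sign (h j)` survives. -/
lemma mul_integral_le_integral_localGain {S : Ω → ℝ} {h : ι → Ω → ℝ} {r σ : ι → ℝ} {ε δ : ℝ}
    (hw : ∀ j, 0 ≤ w j) (hS : HasLaw S (gaussianReal 0 1) P)
    (hh : ∀ j, HasLaw (h j) (gaussianReal 0 1) P) (hindep : IndepFun S (fun ω j ↦ h j ω) P)
    (hr : ∀ j, |r j| ≤ 1) (hδ : 0 ≤ δ) (hσδ : ∀ j, 2 * ε ≤ σ j * δ) :
    (gaussianReal 0 1).real (Ioo (-ε) ε) * ∫ ω, |∑ j, w j * Real.sign (h j ω)| / 2 -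
        2 * ∑ j, w j * (Icc (-δ) δ).indicator 1 (h j ω) ∂P ≤
      ∫ ω, localGain w ε (S ω) (fun j ↦ r j * S ω + σ j * h j ω) ∂P := by
  have := hS.hasGaussianLaw.isProbabilityMeasure
  have hsign := measurable_realSign
  have hnear : Measurable ((Ioo (-ε) ε).indicator (1 : ℝ → ℝ)) :=
    measurable_one.indicator measurableSet_Ioo
  have hflip : Measurable fun s : ℝ ↦ (Ioo (-ε) ε).indicator 1 s * if 0 ≤ s then (1 : ℝ) else -1 :=
    hnear.mul (.ite measurableSet_Ici measurable_const measurable_const)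
  have hsmall : Measurable ((Icc (-δ) δ).indicator (1 : ℝ → ℝ)) :=
    measurable_one.indicator measurableSet_Icc
  have hnearInt : Integrable (fun ω ↦ (Ioo (-ε) ε).indicator (1 : ℝ → ℝ) (S ω)) P :=
    integrable_indicator_one_comp hS.aemeasurable measurableSet_Ioo
  have hflipInt : Integrable
      (fun ω ↦ (Ioo (-ε) ε).indicator (1 : ℝ → ℝ) (S ω) * if 0 ≤ S ω then 1 else -1) P :=
    hnearInt.mono (hflip.comp_aemeasurable hS.aemeasurable).aestronglyMeasurable
      (ae_of_all _ fun ω ↦ by split_ifs <;> simp)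
  have hZint := integrable_sum_mul_sign (w := w) hh
  have hodd : ∫ ω, (∑ j, w j * Real.sign (h j ω)) / 2 ∂P = 0 := by
    rw [integral_div, integral_sum_sign_eq_zero hh, zero_div]
  have hgain := integrable_localGain (Y := fun j ω ↦ r j * S ω + σ j * h j ω) hw hS.aemeasurable
    (fun j ↦ (hS.aemeasurable.const_mul _).add ((hh j).aemeasurable.const_mul _)) ε
  have hindepEven := hindep.comp hnear (ψ := fun a ↦ |∑ j, w j * Real.sign (a j)| / 2 -
    2 * ∑ j, w j * (Icc (-δ) δ).indicator 1 (a j)) (by fun_prop)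
  have hindepOdd := hindep.comp hflip (ψ := fun a ↦ (∑ j, w j * Real.sign (a j)) / 2)
    (by fun_prop)
  rw [← integral_indicator_one_comp hS measurableSet_Ioo]
  exact mul_integral_le_integral_of_indepFun hindepEven hindepOdd hnearInt hflipInt
    ((hZint.abs.div_const 2).sub ((integrable_sum_mul_indicator_Icc hh δ).const_mul 2))
    (hZint.div_const 2) hodd hgain fun ω ↦ indicator_mul_sub_le_localGain hw hr hδ hσδ

lemma mul_le_integral_localGain {S : Ω → ℝ} {h : ι → Ω → ℝ} {r σ : ι → ℝ} {ε δ : ℝ}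
    (hw : ∀ j, 0 ≤ w j) (hS : HasLaw S (gaussianReal 0 1) P)
    (hh : ∀ j, HasLaw (h j) (gaussianReal 0 1) P) (hindep : IndepFun S (fun ω j ↦ h j ω) P)
    (hr : ∀ j, |r j| ≤ 1) (hδ : 0 ≤ δ) (hσδ : ∀ j, 2 * ε ≤ σ j * δ) :
    (gaussianReal 0 1).real (Ioo (-ε) ε) *
        ((∫ ω, |∑ j, w j * Real.sign (h j ω)| ∂P) / 2 - 2 * (δ * ∑ j, w j)) ≤
      ∫ ω, localGain w ε (S ω) (fun j ↦ r j * S ω + σ j * h j ω) ∂P := by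
  refine le_trans ?_ (mul_integral_le_integral_localGain hw hS hh hindep hr hδ hσδ)
  rw [integral_sub ((integrable_sum_mul_sign hh).abs.div_const 2)
    ((integrable_sum_mul_indicator_Icc hh δ).const_mul 2), integral_div, integral_const_mul]
  gcongr
  exact integral_sum_indicator_Icc_le hw hh hδ

end LocalGain

section Standardized

variable {Ω ι : Type*} {mΩ : MeasurableSpace Ω} {P : Measure Ω} {X Y Z : Ω → ℝ} {F : ι → Ω → ℝ}

/-- The regression residual of `Y` on `X` rescaled to unit variance, for `X` and `Y` of unit
variance. -/
noncomputable def standardizedResidual (P : Measure Ω) (X Y : Ω → ℝ) : Ω → ℝ :=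
  fun ω ↦ regressionResidual P X Y ω / √(1 - cov[X, Y; P] ^ 2)

lemma covariance_mul_add_sqrt_mul_standardizedResidual (hXY : |cov[X, Y; P]| < 1) (ω : Ω) :
    cov[X, Y; P] * X ω + √(1 - cov[X, Y; P] ^ 2) * standardizedResidual P X Y ω = Y ω := by
  have hσ : √(1 - cov[X, Y; P] ^ 2) ≠ 0 :=
    (Real.sqrt_pos.2 (sub_pos.2 ((sq_lt_one_iff_abs_lt_one _).2 hXY))).ne'
  rw [standardizedResidual, mul_div_cancel₀ _ hσ, regressionResidual]
  ring

lemma covariance_standardizedResidual_standardizedResidual [IsFiniteMeasure P] (hX : MemLp X 2 P)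
    (hY : MemLp Y 2 P) (hZ : MemLp Z 2 P) (hvar : Var[X; P] = 1) :
    cov[standardizedResidual P X Y, standardizedResidual P X Z; P] =
      (cov[Y, Z; P] - cov[X, Y; P] * cov[X, Z; P]) /
        (√(1 - cov[X, Y; P] ^ 2) * √(1 - cov[X, Z; P] ^ 2)) := by
  unfold standardizedResidual
  rw [covariance_fun_div_left, covariance_fun_div_right,
    covariance_regressionResidual_regressionResidual hX hY hZ hvar, div_div,
    mul_comm (√(1 - cov[X, Z; P] ^ 2))]

lemma hasLaw_standardizedResidual (hgauss : HasGaussianLaw (fun ω ↦ (X ω, Y ω)) P)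
    (hX0 : P[X] = 0) (hY0 : P[Y] = 0) (hXvar : Var[X; P] = 1) (hYvar : Var[Y; P] = 1)
    (hXY : |cov[X, Y; P]| < 1) :
    HasLaw (standardizedResidual P X Y) (gaussianReal 0 1) P := by
  have hpos : 0 < 1 - cov[X, Y; P] ^ 2 := sub_pos.2 ((sq_lt_one_iff_abs_lt_one _).2 hXY)
  have hlaw := gaussianReal_div_const
    (hYvar ▸ hasLaw_regressionResidual hgauss hX0 hY0 hXvar) (√(1 - cov[X, Y; P] ^ 2))
  have hvar : (1 - cov[X, Y; P] ^ 2).toNNReal /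
      NNReal.mk (√(1 - cov[X, Y; P] ^ 2) ^ 2) (sq_nonneg _) = 1 :=
    NNReal.eq (by simp [Real.sq_sqrt hpos.le, hpos.le, hpos.ne'])
  rwa [zero_div, hvar] at hlaw

lemma hasGaussianLaw_prod_standardizedResidual [Finite ι]
    (hgauss : HasGaussianLaw (fun ω ↦ (X ω, fun j ↦ F j ω)) P) :
    HasGaussianLaw (fun ω ↦ (X ω, fun j ↦ standardizedResidual P X (F j) ω)) P := by
  have := Fintype.ofFinite ι
  let fst := ContinuousLinearMap.fst ℝ ℝ (ι → ℝ)
  let snd (j : ι) := (ContinuousLinearMap.proj (R := ℝ) (φ := fun _ : ι ↦ ℝ) j).comp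
    (ContinuousLinearMap.snd ℝ ℝ (ι → ℝ))
  refine (hgauss.map_fun (fst.prod (.pi fun j ↦
    (√(1 - cov[X, F j; P] ^ 2))⁻¹ • (snd j - cov[X, F j; P] • fst)))).congr ?_
  refine ae_of_all _ fun ω ↦ Prod.ext rfl (funext fun j ↦ ?_)
  simp [fst, snd, standardizedResidual, regressionResidual, div_eq_inv_mul]

lemma hasGaussianLaw_prod_eval [Finite ι]
    (hgauss : HasGaussianLaw (fun ω ↦ (X ω, fun j ↦ F j ω)) P) (j : ι) :
    HasGaussianLaw (fun ω ↦ (X ω, F j ω)) P :=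
  have := Fintype.ofFinite ι
  hgauss.map_fun ((ContinuousLinearMap.fst ℝ ℝ (ι → ℝ)).prod
    ((ContinuousLinearMap.proj (R := ℝ) (φ := fun _ : ι ↦ ℝ) j).comp (.snd ℝ ℝ (ι → ℝ))))

lemma indepFun_standardizedResidual [Finite ι]
    (hgauss : HasGaussianLaw (fun ω ↦ (X ω, fun j ↦ F j ω)) P) (hvar : Var[X; P] = 1) :
    IndepFun X (fun ω j ↦ standardizedResidual P X (F j) ω) P := by
  have := Fintype.ofFinite ι
  have := hgauss.isProbabilityMeasure
  have hunit : HasGaussianLaw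
      (fun ω ↦ (fun _ : Unit ↦ X ω, fun j ↦ standardizedResidual P X (F j) ω)) P :=
    HasGaussianLaw.map_fun (hasGaussianLaw_prod_standardizedResidual hgauss)
      ((ContinuousLinearMap.pi fun _ : Unit ↦ ContinuousLinearMap.fst ℝ ℝ (ι → ℝ)).prod
        (ContinuousLinearMap.snd ℝ ℝ (ι → ℝ)))
  have hindep := HasGaussianLaw.indepFun_of_covariance_eval (X := fun _ : Unit ↦ X)
    (Y := fun j ↦ standardizedResidual P X (F j)) hunit fun _ j ↦ by
      unfold standardizedResidual
      rw [covariance_fun_div_right, covariance_regressionResidual_right hgauss.fst.memLp_two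
        (hgauss.snd.eval j).memLp_two hvar, zero_div]
  exact hindep.comp (φ := fun f : Unit → ℝ ↦ f ()) (measurable_pi_apply ()) measurable_id

lemma abs_lt_one_of_mem_Icc {θ p : ℝ} (hθ : 0 < θ) (hp : p ∈ Icc θ (1 - θ)) : |p| < 1 :=
  abs_lt.2 ⟨by linarith [hp.1], by linarith [hp.2]⟩

lemma one_sub_le_sqrt_mul_sqrt {θ p : ℝ} (hθ : 0 ≤ θ) (hp : p ∈ Icc θ (1 - θ)) :
    1 - p ≤ √(1 - θ) * √(1 - p ^ 2) := by
  obtain ⟨hθp, hpθ⟩ := hp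
  rw [← Real.sqrt_mul (by linarith)]
  refine Real.le_sqrt_of_sq_le ?_
  calc (1 - p) ^ 2 = (1 - p) * (1 - p) := sq _
    _ ≤ (1 - p) * ((1 - θ) * (1 + p)) :=
      mul_le_mul_of_nonneg_left (by nlinarith) (by linarith)
    _ = (1 - θ) * (1 - p ^ 2) := by ring

lemma le_sqrt_one_sub_sq {θ p : ℝ} (hθ : 0 ≤ θ) (hp : p ∈ Icc θ (1 - θ)) : θ ≤ √(1 - p ^ 2) :=
  Real.le_sqrt_of_sq_le (by nlinarith [hp.1, hp.2])

/-- `r - p q ≥ -(1 - p) (1 - q)` by the triangle inequality, and `1 - p` is small against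
`√(1 - p ^ 2)`. -/
lemma neg_le_sub_mul_div_of_add_le {θ p q r : ℝ} (hθ : 0 < θ) (hp : p ∈ Icc θ (1 - θ))
    (hq : q ∈ Icc θ (1 - θ)) (htri : p + q ≤ 1 + r) :
    -(1 - θ) ≤ (r - p * q) / (√(1 - p ^ 2) * √(1 - q ^ 2)) := by
  have hprod : (1 - p) * (1 - q) ≤ (√(1 - θ) * √(1 - p ^ 2)) * (√(1 - θ) * √(1 - q ^ 2)) :=
    mul_le_mul (one_sub_le_sqrt_mul_sqrt hθ.le hp) (one_sub_le_sqrt_mul_sqrt hθ.le hq)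
      (by linarith [hq.2]) (by positivity)
  rw [mul_mul_mul_comm, Real.mul_self_sqrt (by linarith [hp.1, hp.2])] at hprod
  rw [le_div_iff₀ (mul_pos (hθ.trans_le (le_sqrt_one_sub_sq hθ.le hp))
    (hθ.trans_le (le_sqrt_one_sub_sq hθ.le hq)))]
  linarith

lemma le_integral_abs_sum_sign_standardizedResidual [Fintype ι] {w : ι → ℝ} {θ t d : ℝ}
    (hgauss : HasGaussianLaw (fun ω ↦ (X ω, fun j ↦ F j ω)) P) (hX0 : P[X] = 0)
    (hF0 : ∀ j, P[F j] = 0) (hXvar : Var[X; P] = 1) (hFvar : ∀ j, Var[F j; P] = 1)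
    (hθ : θ ∈ Ioo 0 1) (hcov : ∀ j, cov[X, F j; P] ∈ Icc θ (1 - θ))
    (htri : ∀ j k, cov[X, F j; P] + cov[X, F k; P] ≤ 1 + cov[F j, F k; P])
    (hw : ∀ j, 0 ≤ w j) (ht : 2 ≤ t) (hd : 0 < d) (hcard : Fintype.card ι ≤ d)
    (htd : 8 * t ^ 2 * d * Real.exp (-(t ^ 2 * θ / 2)) ≤ 1) :
    (∑ j, w j) / (8 * t * d) ≤
      ∫ ω, |∑ j, w j * Real.sign (standardizedResidual P X (F j) ω)| ∂P := by
  have := hgauss.isProbabilityMeasure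
  refine div_le_integral_abs_sum_sign hw
    (fun j ↦ hasLaw_standardizedResidual (hasGaussianLaw_prod_eval hgauss j) hX0 (hF0 j) hXvar
      (hFvar j) (abs_lt_one_of_mem_Icc hθ.1 (hcov j)))
    (fun j k ↦ (hasGaussianLaw_prod_standardizedResidual hgauss).snd.prodMk j k)
    (fun j k ↦ ?_) ⟨sub_nonneg.2 hθ.2.le, by linarith [hθ.1]⟩ ht hd hcard (le_trans ?_ htd)
  · rw [covariance_standardizedResidual_standardizedResidual hgauss.fst.memLp_two
      (hgauss.snd.eval j).memLp_two (hgauss.snd.eval k).memLp_two hXvar]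
    exact neg_le_sub_mul_div_of_add_le hθ.1 (hcov j) (hcov k) (htri j k)
  · gcongr
    nlinarith [hθ.1, hθ.2]

lemma mul_integral_abs_sub_le_integral_localGain [Fintype ι] {w : ι → ℝ} {θ ε : ℝ}
    (hgauss : HasGaussianLaw (fun ω ↦ (X ω, fun j ↦ F j ω)) P) (hX0 : P[X] = 0)
    (hF0 : ∀ j, P[F j] = 0) (hXvar : Var[X; P] = 1) (hFvar : ∀ j, Var[F j; P] = 1)
    (hθ : 0 < θ) (hcov : ∀ j, cov[X, F j; P] ∈ Icc θ (1 - θ)) (hw : ∀ j, 0 ≤ w j) (hε : 0 ≤ ε) :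
    (gaussianReal 0 1).real (Ioo (-ε) ε) *
        ((∫ ω, |∑ j, w j * Real.sign (standardizedResidual P X (F j) ω)| ∂P) / 2 -
          2 * (2 * ε / θ * ∑ j, w j)) ≤
      ∫ ω, localGain w ε (X ω) (fun j ↦ F j ω) ∂P := by
  have := hgauss.isProbabilityMeasure
  have habs (j : ι) : |cov[X, F j; P]| < 1 := abs_lt_one_of_mem_Icc hθ (hcov j)
  have hlaw : HasLaw X (gaussianReal 0 1) P := by
    simpa [hXvar] using hasLaw_gaussianReal_of_hasGaussianLaw hgauss.fst hX0
  have hslope (j : ι) : 2 * ε ≤ √(1 - cov[X, F j; P] ^ 2) * (2 * ε / θ) := by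
    rw [mul_div_assoc', le_div_iff₀' hθ]
    gcongr
    exact le_sqrt_one_sub_sq hθ.le (hcov j)
  have hgain := mul_le_integral_localGain hw hlaw
    (fun j ↦ hasLaw_standardizedResidual (hasGaussianLaw_prod_eval hgauss j) hX0 (hF0 j) hXvar
      (hFvar j) (habs j))
    (indepFun_standardizedResidual hgauss hXvar) (fun j ↦ (habs j).le) (by positivity) hslope
  simpa only [covariance_mul_add_sqrt_mul_standardizedResidual (habs _)] using hgain

lemma mul_sum_div_le_integral_localGain [Fintype ι] {w : ι → ℝ} {θ t d ε : ℝ}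
    (hgauss : HasGaussianLaw (fun ω ↦ (X ω, fun j ↦ F j ω)) P) (hX0 : P[X] = 0)
    (hF0 : ∀ j, P[F j] = 0) (hXvar : Var[X; P] = 1) (hFvar : ∀ j, Var[F j; P] = 1)
    (hθ : θ ∈ Ioo 0 1) (hcov : ∀ j, cov[X, F j; P] ∈ Icc θ (1 - θ))
    (htri : ∀ j k, cov[X, F j; P] + cov[X, F k; P] ≤ 1 + cov[F j, F k; P])
    (hw : ∀ j, 0 ≤ w j) (ht : 2 ≤ t) (hd : 1 ≤ d) (hcard : Fintype.card ι ≤ d)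
    (htd : 8 * t ^ 2 * d * Real.exp (-(t ^ 2 * θ / 2)) ≤ 1) (hε : 0 ≤ ε)
    (hεθ : 128 * t * d * ε ≤ θ) :
    ε * (∑ j, w j) / (96 * t * d) ≤ ∫ ω, localGain w ε (X ω) (fun j ↦ F j ω) ∂P := by
  refine le_trans ?_
    (mul_integral_abs_sub_le_integral_localGain hgauss hX0 hF0 hXvar hFvar hθ.1 hcov hw hε)
  have hmean := le_integral_abs_sum_sign_standardizedResidual hgauss hX0 hF0 hXvar hFvar hθ
    hcov htri hw ht (by linarith) hcard htd
  have hε1 : ε ≤ 1 := by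
    have htd1 : 1 ≤ t * d := by nlinarith
    nlinarith [hθ.2]
  have herror : 2 * ε / θ ≤ 1 / (64 * t * d) := by
    rw [div_le_div_iff₀ hθ.1 (by positivity)]
    linarith
  have hsum : 0 ≤ ∑ j, w j := Finset.sum_nonneg fun j _ ↦ hw j
  have hsplit : (∑ j, w j) / (8 * t * d) / 2 - 2 * (1 / (64 * t * d) * ∑ j, w j) =
      (∑ j, w j) / (32 * t * d) := by
    field_simp
    ring
  calc ε * (∑ j, w j) / (96 * t * d) = ε / 3 * ((∑ j, w j) / (32 * t * d)) := by
        field_simp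
        ring
    _ ≤ (gaussianReal 0 1).real (Ioo (-ε) ε) * ((∑ j, w j) / (32 * t * d)) := by
      gcongr
      exact le_measureReal_gaussianReal_Ioo hε hε1
    _ ≤ _ := by
      rw [← hsplit]
      gcongr

end Standardized

section TotalGain

lemma exists_nat_mul_le_two_pow (a b : ℝ) : ∃ k : ℕ, b ≤ k ∧ a * k ≤ 2 ^ k := by
  have hlim := (tendsto_pow_const_div_const_pow_of_one_lt 1 (one_lt_two (α := ℝ))).const_mul a
  rw [mul_zero] at hlim
  obtain ⟨k, hak, hbk⟩ := ((hlim.eventually_le_const one_pos).and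
    (tendsto_natCast_atTop_atTop.eventually_ge_atTop b)).exists
  refine ⟨k, hbk, ?_⟩
  rwa [pow_one, mul_div_assoc', div_le_one (by positivity)] at hak

lemma half_le_log_natCast {d : ℕ} (hd : 2 ≤ d) : 1 / 2 ≤ Real.log d := by
  have hlog := Real.log_le_log two_pos (Nat.ofNat_le_cast.2 hd : (2 : ℝ) ≤ d)
  linarith [Real.log_two_gt_d9]

lemma exists_scale {θ : ℝ} (hθ : 0 < θ) :
    ∃ τ > 0, ∀ d : ℕ, 2 ≤ d → 2 ≤ τ * √(Real.log d) ∧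
      8 * (τ * √(Real.log d)) ^ 2 * d * Real.exp (-((τ * √(Real.log d)) ^ 2 * θ / 2)) ≤ 1 := by
  obtain ⟨k, hk, hk2⟩ := exists_nat_mul_le_two_pow (64 / θ) (max (4 * θ) 2)
  have hk4 : 4 * θ ≤ k := (le_max_left _ _).trans hk
  have hk1 : 2 ≤ k := by exact_mod_cast (le_max_right _ _).trans hk
  refine ⟨√(2 * k / θ), by positivity, fun d hd ↦ ?_⟩
  have hlog := half_le_log_natCast hd
  have hd2 : (2 : ℝ) ≤ d := Nat.ofNat_le_cast.2 hd
  rw [← Real.sqrt_mul (by positivity), Real.sq_sqrt (by positivity)]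
  constructor
  · refine Real.le_sqrt_of_sq_le ?_
    have hkθ : 8 ≤ 2 * k / θ := by
      rw [le_div_iff₀ hθ]
      linarith
    nlinarith
  · have hexp : Real.exp (-(2 * k / θ * Real.log d * θ / 2)) = ((d : ℝ) ^ k)⁻¹ := by
      rw [show 2 * k / θ * Real.log d * θ / 2 = k * Real.log d by field_simp, Real.exp_neg,
        Real.exp_nat_mul, Real.exp_log (by linarith)]
    rw [hexp, ← div_eq_mul_inv, div_le_one (by positivity)]
    obtain ⟨m, rfl⟩ := Nat.exists_eq_add_of_le hk1
    calc 8 * (2 * ((2 + m : ℕ) : ℝ) / θ * Real.log d) * d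
        ≤ 8 * (2 * ((2 + m : ℕ) : ℝ) / θ * d) * d := by
          gcongr
          exact Real.log_le_self (by positivity)
      _ = d ^ 2 * (64 / θ * (2 + m : ℕ) / 4) := by ring
      _ ≤ d ^ 2 * (2 ^ (2 + m) / 4) := by gcongr
      _ = d ^ 2 * 2 ^ m := by ring
      _ ≤ (d : ℝ) ^ 2 * d ^ m := by gcongr
      _ = (d : ℝ) ^ (2 + m) := (pow_add _ _ _).symm

lemma mul_sum_div_le_integral_localGain_mul {Ω ι : Type*} {mΩ : MeasurableSpace Ω}
    {P : Measure Ω} {X : Ω → ℝ} {F : ι → Ω → ℝ} [Fintype ι] {b w : ι → ℝ} {θ t d ε : ℝ}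
    (hgauss : HasGaussianLaw (fun ω ↦ (X ω, fun j ↦ F j ω)) P) (hX0 : P[X] = 0)
    (hF0 : ∀ j, P[F j] = 0) (hXvar : Var[X; P] = 1) (hFvar : ∀ j, Var[F j; P] = 1)
    (hb : ∀ j, b j = 1 ∨ b j = -1) (hθ : θ ∈ Ioo 0 1)
    (hcov : ∀ j, b j * cov[X, F j; P] ∈ Icc θ (1 - θ))
    (htri : ∀ j k, b j * cov[X, F j; P] + b k * cov[X, F k; P] ≤ 1 + b j * b k * cov[F j, F k; P])
    (hw : ∀ j, 0 ≤ w j) (ht : 2 ≤ t) (hd : 1 ≤ d) (hcard : Fintype.card ι ≤ d)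
    (htd : 8 * t ^ 2 * d * Real.exp (-(t ^ 2 * θ / 2)) ≤ 1) (hε : 0 ≤ ε)
    (hεθ : 128 * t * d * ε ≤ θ) :
    ε * (∑ j, w j) / (96 * t * d) ≤ ∫ ω, localGain w ε (X ω) (fun j ↦ b j * F j ω) ∂P := by
  have hsigned : HasGaussianLaw (fun ω ↦ (X ω, fun j ↦ b j * F j ω)) P :=
    hgauss.map_fun ((ContinuousLinearMap.fst ℝ ℝ (ι → ℝ)).prod (.pi fun j ↦ b j •
      (ContinuousLinearMap.proj (R := ℝ) (φ := fun _ : ι ↦ ℝ) j).comp (.snd ℝ ℝ (ι → ℝ))))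
  refine mul_sum_div_le_integral_localGain (F := fun j ω ↦ b j * F j ω) hsigned hX0
    (fun j ↦ ?_) hXvar (fun j ↦ ?_) hθ (fun j ↦ ?_) (fun j k ↦ ?_) hw ht hd hcard htd hε hεθ
  · rw [integral_const_mul, hF0, mul_zero]
  · rw [variance_const_mul, hFvar, mul_one, sq_eq_one_iff.2 (hb j)]
  · rw [covariance_const_mul_right]
    exact hcov j
  · simp only [covariance_const_mul_right, covariance_const_mul_left]
    linarith [htri j k]

theorem expected_total_gain_general {θ : ℝ} (hθ : θ ∈ Ioo 0 1) :
    ∃ C > 0, ∃ c > 0, ∀ d : ℕ, 2 ≤ d → ∀ ε : ℝ, ε = 1 / (C * d * √(Real.log d)) →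
      ∀ (Ω V : Type*) [MeasurableSpace Ω] [Fintype V] (P : Measure Ω) (X : V → Ω → ℝ),
        HasGaussianLaw (fun ω i ↦ X i ω) P → (∀ i, P[X i] = 0) → (∀ i, Var[X i; P] = 1) →
      ∀ N : V → Finset V, (∀ i, (N i).card ≤ d) →
      ∀ b w : V → V → ℝ, (∀ i, ∀ j ∈ N i, b i j = 1 ∨ b i j = -1) →
        (∀ i, ∀ j ∈ N i, 0 ≤ w i j) →
        (∀ i, ∀ j ∈ N i, b i j * cov[X i, X j; P] ∈ Icc θ (1 - θ)) →
        (∀ i, ∀ j ∈ N i, ∀ k ∈ N i, b i j * cov[X i, X j; P] + b i k * cov[X i, X k; P] ≤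
          1 + b i j * b i k * cov[X j, X k; P]) →
      c * (∑ i, ∑ j ∈ N i, w i j) / (d ^ 2 * Real.log d) ≤
        ∫ ω, ∑ i, localGain (fun j : N i ↦ w i j) ε (X i ω) (fun j : N i ↦ b i j * X j ω) ∂P := by
  obtain ⟨τ, hτ, hscale⟩ := exists_scale hθ.1
  have hθ0 := hθ.1
  refine ⟨128 * τ / θ, by positivity, θ / (96 * 128 * τ ^ 2), by positivity, ?_⟩
  intro d hd ε rfl Ω V _ _ P X hgauss hX0 hXvar N hN b w hb hw hcov htri
  obtain ⟨ht, htd⟩ := hscale d hd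
  have hlog := half_le_log_natCast hd
  have hd1 : (1 : ℝ) ≤ d := Nat.one_le_cast.2 (by lia)
  have := hgauss.isProbabilityMeasure
  rw [integral_finsetSum]
  · rw [Finset.mul_sum, Finset.sum_div]
    refine Finset.sum_le_sum fun i _ ↦ ?_
    have hstar : HasGaussianLaw (fun ω ↦ (X i ω, fun j : N i ↦ X j ω)) P :=
      hgauss.map_fun ((ContinuousLinearMap.proj (R := ℝ) (φ := fun _ : V ↦ ℝ) i).prod
        (.pi fun j : N i ↦ .proj (R := ℝ) (φ := fun _ : V ↦ ℝ) j))
    refine le_of_eq_of_le ?_ (mul_sum_div_le_integral_localGain_mul hstar (hX0 i)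
      (fun j : N i ↦ hX0 j) (hXvar i) (fun j : N i ↦ hXvar j) (fun j : N i ↦ hb i j j.2) hθ
      (fun j : N i ↦ hcov i j j.2) (fun j k ↦ htri i j j.2 k k.2) (fun j : N i ↦ hw i j j.2)
      ht hd1 (by simpa using hN i) htd (by positivity) (by field_simp; rfl))
    rw [Finset.sum_coe_sort (N i) (w i)]
    field_simp
    rw [Real.sq_sqrt (by linarith)]
  · exact fun i _ ↦ integrable_localGain (fun j : N i ↦ hw i j j.2) (hgauss.eval i).aemeasurable
      (fun j : N i ↦ (hgauss.eval (j : V)).aemeasurable.const_mul _) _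

end TotalGain

section GWRatio

lemma gwRatio_one_half : gwRatio (1 / 2) = 8 / 9 := by
  have harcsin : Real.arcsin (1 / 2) = Real.pi / 6 := by
    rw [← Real.sin_pi_div_six]
    exact Real.arcsin_sin (by linarith [Real.pi_pos]) (by linarith [Real.pi_pos])
  rw [gwRatio, harcsin]
  field_simp
  norm_num

lemma one_div_ten_le_of_gwRatio_le {r : ℝ} (hr : -1 < r) (hgw : gwRatio r ≤ 8 / 9) :
    1 / 10 ≤ r := by
  rw [gwRatio, div_le_iff₀ (by linarith)] at hgw
  by_contra! hlt
  rcases le_or_gt 0 r with h0 | h0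
  · have harcsin : 0 ≤ 2 / Real.pi * Real.arcsin r :=
      mul_nonneg (by positivity) (Real.arcsin_nonneg.2 h0)
    linarith
  · have hjordan := Real.mul_le_sin (Real.arcsin_nonneg.2 (by linarith : 0 ≤ -r))
      (Real.arcsin_le_pi_div_two _)
    rw [Real.sin_arcsin (by linarith) (by linarith), Real.arcsin_neg] at hjordan
    linarith

lemma le_of_gwRatio_le {r : ℝ} (hr : r ∈ Icc 0 1) (hgw : gwRatio r ≤ 8 / 9) :
    r ≤ 98 / 100 := by
  have hpi := Real.pi_pos
  rw [gwRatio, div_le_iff₀ (by linarith [hr.1])] at hgw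
  have harcsin : Real.arcsin r ≤ 7 * Real.pi / 18 := by
    have hle : 2 / Real.pi * Real.arcsin r ≤ 7 / 9 := by linarith [hr.2]
    rw [div_mul_eq_mul_div, div_le_iff₀ hpi] at hle
    linarith
  have hangle : Real.sin (7 * Real.pi / 18) = Real.cos (Real.pi / 9) := by
    rw [← Real.cos_pi_div_two_sub]
    congr 1
    ring
  calc r ≤ Real.cos (Real.pi / 9) := by
        rwa [← hangle, ← Real.arcsin_le_iff_le_sin' ⟨by linarith, by linarith⟩]
    _ ≤ 1 - 2 / Real.pi ^ 2 * (Real.pi / 9) ^ 2 :=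
      Real.cos_le_one_sub_mul_cos_sq (by rw [abs_of_pos (by positivity)]; linarith)
    _ = 79 / 81 := by
      field_simp
      norm_num
    _ ≤ 98 / 100 := by norm_num

lemma mem_Icc_of_gwRatio_minimal {r : ℝ} (hr : r ∈ Ioc (-1) 1)
    (hmin : ∀ s ∈ Ioc (-1 : ℝ) 1, gwRatio r ≤ gwRatio s) : r ∈ Icc (1 / 10) (98 / 100) := by
  have hgw : gwRatio r ≤ 8 / 9 :=
    gwRatio_one_half ▸ hmin (1 / 2) ⟨by norm_num, by norm_num⟩
  have hlow := one_div_ten_le_of_gwRatio_le hr.1 hgw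
  exact ⟨hlow, le_of_gwRatio_le ⟨by linarith, hr.2⟩ hgw⟩

end GWRatio

section LinearForm

variable {ι : Type*} [Fintype ι]

/-- The standard Gaussian measure on `ι → ℝ`. -/
noncomputable abbrev stdGaussianPi (ι : Type*) [Fintype ι] : Measure (ι → ℝ) :=
  Measure.pi fun _ ↦ gaussianReal 0 1

lemma hasLaw_eval_stdGaussianPi (t : ι) :
    HasLaw (fun g : ι → ℝ ↦ g t) (gaussianReal 0 1) (stdGaussianPi ι) :=
  ⟨(measurable_pi_apply t).aemeasurable,
    (measurePreserving_eval (fun _ : ι ↦ gaussianReal 0 1) t).map_eq⟩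

lemma iIndepFun_eval_stdGaussianPi :
    iIndepFun (fun (t : ι) (g : ι → ℝ) ↦ g t) (stdGaussianPi ι) :=
  iIndepFun_pi (X := fun _ x ↦ x) fun _ ↦ aemeasurable_id

lemma hasGaussianLaw_stdGaussianPi :
    HasGaussianLaw (fun (g : ι → ℝ) (t : ι) ↦ g t) (stdGaussianPi ι) :=
  iIndepFun.hasGaussianLaw (fun t ↦ (hasLaw_eval_stdGaussianPi t).hasGaussianLaw)
    iIndepFun_eval_stdGaussianPi

lemma memLp_eval_stdGaussianPi (t : ι) : MemLp (fun g : ι → ℝ ↦ g t) 2 (stdGaussianPi ι) :=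
  (hasLaw_eval_stdGaussianPi t).hasGaussianLaw.memLp_two

lemma covariance_eval_stdGaussianPi [DecidableEq ι] (s t : ι) :
    cov[fun g : ι → ℝ ↦ g s, fun g ↦ g t; stdGaussianPi ι] = if s = t then 1 else 0 := by
  split_ifs with hst
  · subst hst
    rw [covariance_self (measurable_pi_apply s).aemeasurable,
      (hasLaw_eval_stdGaussianPi s).variance_eq]
    simp
  · exact (iIndepFun_eval_stdGaussianPi.indepFun hst).covariance_eq_zero
      (memLp_eval_stdGaussianPi s) (memLp_eval_stdGaussianPi t)

lemma covariance_sum_mul_stdGaussianPi (x y : ι → ℝ) :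
    cov[fun g ↦ ∑ t, x t * g t, fun g ↦ ∑ t, y t * g t; stdGaussianPi ι] = ∑ t, x t * y t := by
  classical
  rw [covariance_fun_sum_fun_sum (fun t ↦ (memLp_eval_stdGaussianPi t).const_mul _)
    fun t ↦ (memLp_eval_stdGaussianPi t).const_mul _]
  simp [covariance_const_mul_left, covariance_const_mul_right, covariance_eval_stdGaussianPi,
    mul_comm]

lemma variance_sum_mul_stdGaussianPi (x : ι → ℝ) :
    Var[fun g ↦ ∑ t, x t * g t; stdGaussianPi ι] = ∑ t, x t ^ 2 := by
  rw [← covariance_self (Measurable.aemeasurable (by fun_prop)), covariance_sum_mul_stdGaussianPi]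
  simp only [sq]

lemma integral_sum_mul_stdGaussianPi (x : ι → ℝ) :
    ∫ g, ∑ t, x t * g t ∂stdGaussianPi ι = 0 := by
  rw [integral_finsetSum _ fun t _ ↦
    ((memLp_eval_stdGaussianPi t).integrable one_le_two).const_mul _]
  simp [integral_const_mul, (hasLaw_eval_stdGaussianPi _).integral_eq]

lemma hasGaussianLaw_sum_mul_stdGaussianPi {V : Type*} [Finite V] (v : V → ι → ℝ) :
    HasGaussianLaw (fun (g : ι → ℝ) i ↦ ∑ t, v i t * g t) (stdGaussianPi ι) := by
  have := Fintype.ofFinite V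
  refine (hasGaussianLaw_stdGaussianPi.map_fun (ContinuousLinearMap.pi fun i ↦
    ∑ t, v i t • ContinuousLinearMap.proj (R := ℝ) (φ := fun _ : ι ↦ ℝ) t)).congr ?_
  exact ae_of_all _ fun g ↦ funext fun i ↦ by simp

lemma sum_sq_mul_sub_mul {x y : ι → ℝ} {a c : ℝ} (hx : ∑ t, x t ^ 2 = 1) (hy : ∑ t, y t ^ 2 = 1)
    (ha : a ^ 2 = 1) (hc : c ^ 2 = 1) :
    ∑ t, (a * x t - c * y t) ^ 2 = 2 - 2 * (a * c * ∑ t, x t * y t) := by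
  have hexpand (t : ι) : (a * x t - c * y t) ^ 2 =
      a ^ 2 * x t ^ 2 + c ^ 2 * y t ^ 2 - 2 * (a * c * (x t * y t)) := by ring
  simp only [hexpand, Finset.sum_sub_distrib, Finset.sum_add_distrib, ← Finset.mul_sum, hx, hy,
    ha, hc]
  norm_num

lemma mul_sum_add_mul_sum_le_of_triangle {x y z : ι → ℝ} {a c : ℝ} (hx : ∑ t, x t ^ 2 = 1)
    (hy : ∑ t, y t ^ 2 = 1) (hz : ∑ t, z t ^ 2 = 1) (ha : a ^ 2 = 1) (hc : c ^ 2 = 1)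
    (htri : ∑ t, (1 * x t - -c * z t) ^ 2 ≤
      ∑ t, (1 * x t - a * y t) ^ 2 + ∑ t, (a * y t - -c * z t) ^ 2) :
    a * ∑ t, x t * y t + c * ∑ t, x t * z t ≤ 1 + a * c * ∑ t, y t * z t := by
  have hnegc : (-c) ^ 2 = 1 := (neg_sq c).trans hc
  rw [sum_sq_mul_sub_mul hx hz (one_pow 2) hnegc, sum_sq_mul_sub_mul hx hy (one_pow 2) ha,
    sum_sq_mul_sub_mul hy hz ha hnegc] at htri
  linarith

end LinearForm

lemma localGain_coe_mul {V : Type*} (s : Finset V) (w b y : V → ℝ) (ε x : ℝ) :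
    localGain (fun j : s ↦ w j) ε x (fun j : s ↦ b j * y j) =
      if |x| < ε then
        max 0 (2 * (∑ j ∈ s, if b j * (if 0 ≤ x then (1 : ℝ) else -1) * y j ≤ -ε then w j else 0) -
          ∑ j ∈ s, w j)
      else 0 := by
  simp only [← Finset.sum_coe_sort s, localGain, mul_left_comm, mul_assoc]

/-- Expected total gain: there are absolute constants `C, c > 0` such that for every
`d ≥ 2`, `ε = 1/(C d √(log d))`, every weighted signed graph `G` on `n` vertices of
maximum degree `≤ d` with total edge weight `W`, and unit SDP vectors satisfying
`b_{ij}⟨v_i,v_j⟩ ∈ [ρ*-0.01, ρ*+0.01]` on all edges and all ℓ₂² triangle inequalities,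
the expected total local gain `E_g[Σ_{i∈S} Δ_i]` is at least `c·W/(d² log d)`. -/
theorem expected_total_gain :
    ∃ C c : ℝ, C > 0 ∧ c > 0 ∧ ∀ d : ℕ, 2 ≤ d → ∀ ε : ℝ,
      ε = 1 / (C * d * Real.sqrt (Real.log d)) →
      ∀ ρstar : ℝ, ρstar ∈ Set.Ioc (-1 : ℝ) 1 →
        (∀ ρ ∈ Set.Ioc (-1 : ℝ) 1, gwRatio ρstar ≤ gwRatio ρ) →
      ∀ (n : ℕ) (G : SimpleGraph (Fin n)) (_ : DecidableRel G.Adj),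
        (∀ i, G.degree i ≤ d) →
      ∀ b w : Fin n → Fin n → ℝ,
        (∀ i j, b i j = b j i) → (∀ i j, b i j = 1 ∨ b i j = -1) →
        (∀ i j, w i j = w j i) → (∀ i j, 0 ≤ w i j) →
      ∀ W : ℝ, W = (1 / 2) * ∑ i, ∑ j ∈ G.neighborFinset i, w i j →
      ∀ v : Fin n → (Fin n → ℝ),
        (∀ i, ∑ t, v i t ^ 2 = 1) →
        (∀ i j, G.Adj i j →
          b i j * ∑ t, v i t * v j t ∈ Set.Icc (ρstar - 0.01) (ρstar + 0.01)) →
        (∀ i j k : Fin n, ∀ ai aj ak : ℝ,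
          (ai = 1 ∨ ai = -1) → (aj = 1 ∨ aj = -1) → (ak = 1 ∨ ak = -1) →
          (∑ t, (ai * v i t - aj * v j t) ^ 2) + ∑ t, (aj * v j t - ak * v k t) ^ 2 ≥
            ∑ t, (ai * v i t - ak * v k t) ^ 2) →
        (∫ g : Fin n → ℝ,
            ∑ i, (if |∑ t, v i t * g t| < ε then
              max 0 (2 * (∑ j ∈ G.neighborFinset i,
                  if b i j * (if 0 ≤ ∑ t, v i t * g t then (1 : ℝ) else -1) *
                      (∑ t, v j t * g t) ≤ -ε then w i j else 0) -
                ∑ j ∈ G.neighborFinset i, w i j)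
              else 0)
          ∂(Measure.pi fun _ : Fin n => gaussianReal 0 1)) ≥
          c * W / (d ^ 2 * Real.log d) := by
  obtain ⟨C, hC, c, hc, hgain⟩ := expected_total_gain_general (θ := 0.01) (by norm_num)
  refine ⟨C, 2 * c, hC, by positivity, ?_⟩
  intro d hd ε hε ρ hρ hmin n G _ hdeg b w _ hb _ hw W hW v hv hcorr htri
  have hρ_mem := mem_Icc_of_gwRatio_minimal hρ hmin
  have hsq (i j : Fin n) : b i j ^ 2 = 1 := sq_eq_one_iff.2 (hb i j)
  have hneg (i j : Fin n) : -b i j = 1 ∨ -b i j = -1 := by rcases hb i j with h | h <;> simp [h]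
  have hbound := hgain d hd ε hε (Fin n → ℝ) (Fin n) (stdGaussianPi (Fin n))
    (fun i g ↦ ∑ t, v i t * g t) (hasGaussianLaw_sum_mul_stdGaussianPi v)
    (fun i ↦ integral_sum_mul_stdGaussianPi (v i))
    (fun i ↦ (variance_sum_mul_stdGaussianPi (v i)).trans (hv i))
    (fun i ↦ G.neighborFinset i) hdeg b w (fun i j _ ↦ hb i j)
    (fun i j _ ↦ hw i j) (fun i j hj ↦ ?_) (fun i j _ k _ ↦ ?_)
  · simp only [← localGain_coe_mul]
    rw [hW, ← mul_assoc, mul_one_div, mul_div_cancel_left₀ c two_ne_zero]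
    exact hbound
  · rw [covariance_sum_mul_stdGaussianPi]
    exact Icc_subset_Icc (by linarith [hρ_mem.1]) (by linarith [hρ_mem.2])
      (hcorr i j ((G.mem_neighborFinset i j).1 hj))
  · simp only [covariance_sum_mul_stdGaussianPi]
    exact mul_sum_add_mul_sum_le_of_triangle (hv i) (hv j) (hv k) (hsq i j) (hsq i k)
      (htri i j k 1 (b i j) (-b i k) (.inl rfl) (hb i j) (hneg i k))
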